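/- arXiv:2302.02540 — 4 statements merged into one kernel-verified Lean document; each statement's English description precedes it below -/
import Mathlib

section
/- For β > 1/2, ∫₀^∞ η_β(x)² dx = 2^{8β−3} β² Γ(β)⁴ / (π Γ(4β)). -/
/-- The normalized Bessel function `η_β(x) = 2^β Γ(β+1) J_β(x) / x^β`, given by its
power series, with `η_β(0) = 1`. -/
noncomputable def besselEta (β : ℝ) (x : ℝ) : ℝ :=
  Real.Gamma (β + 1) *
    ∑' n : ℕ, (-1) ^ n / (n.factorial * Real.Gamma (n + β + 1)) * (x / 2) ^ (2 * n)

/-!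
By Poisson's formula, `η_β(2πω)` is, up to the constant `B(1/2, β + 1/2)`, the Fourier transform of
the weight `(1 - t²)^(β - 1/2)` on `(-1, 1)`; this follows by integrating the cosine series term by
term, the even moments of the weight being Beta values. The square of the weight is again such a
weight, so Plancherel's theorem turns the integral of `η_β²` into the Beta value `B(1/2, 2β)`, and
Legendre's duplication formula puts the quotient into closed form. The weight is square integrable
exactly when `β > 0`.
-/

open MeasureTheory Set Real FourierTransform ProbabilityTheory
open scoped SchwartzMap Nat

section Plancherel

variable {E F : Type*} [NormedAddCommGroup F]

theorem sq_norm_Lp_two_eq_integral {α : Type*} [MeasurableSpace α] {μ : Measure α}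
    (f : Lp F 2 μ) : ‖f‖ ^ 2 = ∫ x, ‖f x‖ ^ 2 ∂μ := by
  have integral_sq_nonneg : 0 ≤ ∫ x, ‖f x‖ ^ 2 ∂μ := integral_nonneg fun x ↦ by positivity
  rw [Lp.norm_def, toReal_eLpNorm (Lp.aestronglyMeasurable f),
    lpNorm_eq_integral_norm_rpow_toReal two_ne_zero ENNReal.ofNat_ne_top
      (Lp.aestronglyMeasurable f)]
  simp only [ENNReal.toReal_ofNat, rpow_two]
  rw [← rpow_natCast, Nat.cast_ofNat, rpow_inv_rpow integral_sq_nonneg two_ne_zero]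

variable [NormedAddCommGroup E] [InnerProductSpace ℝ E] [FiniteDimensional ℝ E]
  [MeasurableSpace E] [BorelSpace E] [InnerProductSpace ℂ F] [CompleteSpace F] {f : E → F}

theorem fourier_toLp_two_ae_eq (hf : Integrable f) (hf₂ : MemLp f 2) :
    (𝓕 (hf₂.toLp f) : Lp F 2 (volume : Measure E)) =ᵐ[volume] 𝓕 f := by
  have continuous_fourier : Continuous (𝓕 f) :=
    VectorFourier.fourierIntegral_continuous continuous_fourierChar
      (L := innerₗ E) continuous_inner hf
  refine ae_eq_of_integral_contDiff_smul_eq ((Lp.memLp _).locallyIntegrable one_le_two)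
    continuous_fourier.locallyIntegrable fun g g_smooth g_compact ↦ ?_
  let ψ : 𝓢(E, ℂ) := (g_compact.comp_left (g := Complex.ofRealCLM) rfl).toSchwartzMap
    (Complex.ofRealCLM.contDiff.comp g_smooth)
  have ψ_smul (x : E) (y : F) : ψ x • y = g x • y := Complex.coe_smul (g x) y
  calc ∫ x, g x • (𝓕 (hf₂.toLp f) : Lp F 2 (volume : Measure E)) x
      = ((𝓕 (hf₂.toLp f) : Lp F 2 (volume : Measure E)) : 𝓢'(E, F)) ψ := by
        simp only [Lp.toTemperedDistribution_apply, ψ_smul]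
    _ = ∫ x, (𝓕 ψ) x • hf₂.toLp f x := by
        rw [← Lp.fourier_toTemperedDistribution_eq, TemperedDistribution.fourier_apply,
          Lp.toTemperedDistribution_apply]
    _ = ∫ x, 𝓕 (ψ : E → ℂ) x • f x := by
        rw [SchwartzMap.fourier_coe]
        refine integral_congr_ae ?_
        filter_upwards [hf₂.coeFn_toLp] with x hx
        rw [hx]
    _ = ∫ x, ψ x • 𝓕 f x := by
        simpa using! VectorFourier.integral_fourierIntegral_smul_eq_flip (L := innerₗ E)
          continuous_fourierChar continuous_inner ψ.integrable hf
    _ = ∫ x, g x • 𝓕 f x := by simp only [ψ_smul]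

theorem integral_sq_norm_fourier_eq (hf : Integrable f) (hf₂ : MemLp f 2) :
    ∫ ω, ‖𝓕 f ω‖ ^ 2 = ∫ x, ‖f x‖ ^ 2 :=
  calc ∫ ω, ‖𝓕 f ω‖ ^ 2
      = ∫ ω, ‖(𝓕 (hf₂.toLp f) : Lp F 2 (volume : Measure E)) ω‖ ^ 2 :=
        integral_congr_ae <| (fourier_toLp_two_ae_eq hf hf₂).symm.fun_comp (‖·‖ ^ 2)
    _ = ∫ x, ‖hf₂.toLp f x‖ ^ 2 := by
        rw [← sq_norm_Lp_two_eq_integral, Lp.norm_fourier_eq, sq_norm_Lp_two_eq_integral]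
    _ = ∫ x, ‖f x‖ ^ 2 := integral_congr_ae <| hf₂.coeFn_toLp.fun_comp (‖·‖ ^ 2)

end Plancherel

section CosineTransform

variable {f : ℝ → ℝ}

theorem integral_eq_zero_of_odd (hodd : f.Odd) : ∫ t, f t = 0 := by
  have integral_neg_comp := integral_neg_eq_self f volume
  simp only [hodd _, integral_neg] at integral_neg_comp
  linarith

theorem fourier_ofReal_of_even (hf : Integrable f) (heven : f.Even) (ω : ℝ) :
    𝓕 (fun t ↦ (f t : ℂ)) ω = ((∫ t, cos (2 * π * ω * t) * f t : ℝ) : ℂ) := by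
  have integrand_eq (t : ℝ) : 𝐞 (-(t * ω)) • (f t : ℂ) =
      ((cos (2 * π * ω * t) * f t : ℝ) : ℂ) - (sin (2 * π * ω * t) * f t : ℝ) * Complex.I := by
    rw [Circle.smul_def, fourierChar_apply, show 2 * π * -(t * ω) = -(2 * π * ω * t) by ring,
      Complex.exp_mul_I, ← Complex.ofReal_cos, ← Complex.ofReal_sin, cos_neg, sin_neg, smul_eq_mul]
    push_cast
    ring
  have cos_integrable : Integrable fun t ↦ cos (2 * π * ω * t) * f t :=
    hf.bdd_mul (by fun_prop) (.of_forall fun t ↦ abs_cos_le_one _)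
  have sin_integrable : Integrable fun t ↦ sin (2 * π * ω * t) * f t :=
    hf.bdd_mul (by fun_prop) (.of_forall fun t ↦ abs_sin_le_one _)
  have sin_integral : ∫ t, sin (2 * π * ω * t) * f t = 0 :=
    integral_eq_zero_of_odd fun t ↦ by rw [heven, mul_neg, sin_neg, neg_mul]
  rw [fourier_real_eq, integral_congr_ae (.of_forall integrand_eq),
    integral_sub cos_integrable.ofReal (sin_integrable.ofReal.mul_const _), integral_mul_const,
    integral_complex_ofReal, integral_complex_ofReal, sin_integral, Complex.ofReal_zero, zero_mul,
    sub_zero]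

theorem hasSum_integral_cos_mul {R : ℝ} (hf : Integrable f) (hR : ∀ t, R < |t| → f t = 0) (x : ℝ) :
    HasSum (fun n : ℕ ↦ (-1) ^ n * x ^ (2 * n) / (2 * n)! * ∫ t, t ^ (2 * n) * f t)
      (∫ t, cos (x * t) * f t) := by
  have hasSum_bound (t : ℝ) :
      HasSum (fun n : ℕ ↦ (x * R) ^ (2 * n) / (2 * n)! * ‖f t‖) (cosh (x * R) * ‖f t‖) :=
    (hasSum_cosh (x * R)).mul_right _
  simp only [← integral_const_mul]
  refine hasSum_integral_of_dominated_convergence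
    (fun n t ↦ (x * R) ^ (2 * n) / (2 * n)! * ‖f t‖)
    (fun n ↦ by have := hf.aestronglyMeasurable; fun_prop)
    (fun n ↦ .of_forall fun t ↦ ?_) (.of_forall fun t ↦ (hasSum_bound t).summable)
    ?_ (.of_forall fun t ↦ ?_)
  · rcases lt_or_ge R |t| with ht | ht
    · simp [hR t ht]
    · have pow_le : |t| ^ (2 * n) ≤ R ^ (2 * n) := pow_le_pow_left₀ (abs_nonneg t) ht _
      have x_pow_nonneg : 0 ≤ x ^ (2 * n) := (even_two_mul n).pow_nonneg x
      calc ‖(-1) ^ n * x ^ (2 * n) / (2 * n)! * (t ^ (2 * n) * f t)‖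
          = x ^ (2 * n) * |t| ^ (2 * n) / (2 * n)! * ‖f t‖ := by
            simp only [norm_mul, norm_div, norm_pow, norm_neg, norm_one, one_pow, one_mul,
              RCLike.norm_natCast, norm_eq_abs, (even_two_mul n).pow_abs]
            ring
        _ ≤ (x * R) ^ (2 * n) / (2 * n)! * ‖f t‖ := by
            rw [mul_pow]
            gcongr
  · simp only [(hasSum_bound _).tsum_eq]
    exact hf.norm.const_mul _
  · convert! (hasSum_cos (x * t)).mul_right (f t) using 2 with n
    ring

end CosineTransform

section Beta

theorem setIntegral_rpow_mul_one_sub_rpow {u v : ℝ} (hu : 0 < u) (hv : 0 < v) :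
    ∫ y in Ioo (0 : ℝ) 1, y ^ (u - 1) * (1 - y) ^ (v - 1) = beta u v := by
  have betaIntegral_eq : Complex.betaIntegral u v =
      ((∫ y in Ioo (0 : ℝ) 1, y ^ (u - 1) * (1 - y) ^ (v - 1) : ℝ) : ℂ) := by
    rw [Complex.betaIntegral, intervalIntegral.integral_of_le zero_le_one,
      integral_Ioc_eq_integral_Ioo, ← integral_complex_ofReal]
    refine setIntegral_congr_fun measurableSet_Ioo fun y hy ↦ ?_
    simp only [Complex.ofReal_mul, Complex.ofReal_cpow hy.1.le,
      Complex.ofReal_cpow (sub_nonneg.2 hy.2.le), Complex.ofReal_sub, Complex.ofReal_one]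
  rw [beta_eq_betaIntegralReal u v hu hv, betaIntegral_eq, Complex.ofReal_re]

theorem beta_one_half_left {s : ℝ} (hs : 0 < s) :
    beta (1 / 2) s = 2 ^ (2 * s - 1) * Gamma s ^ 2 / Gamma (2 * s) := by
  have duplication := Gamma_mul_Gamma_add_half s
  rw [← neg_sub (2 * s), rpow_neg two_pos.le] at duplication
  rw [beta, Gamma_one_half_eq, add_comm]
  field_simp at duplication ⊢
  linear_combination -duplication

theorem beta_one_half_add_half {s : ℝ} (hs : 0 < s) :
    beta (1 / 2) (s + 1 / 2) = π / (s * beta (1 / 2) s) := by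
  rw [beta, beta, Gamma_one_half_eq, add_comm _ s, show 1 / 2 + (s + 1 / 2) = s + 1 by ring,
    Gamma_add_one hs.ne']
  field_simp
  exact sq_sqrt pi_pos.le

theorem Gamma_nat_add_half_eq_factorial (n : ℕ) :
    Gamma (n + 1 / 2) = (2 * n)! * √π / (4 ^ n * n !) := by
  have duplication := Gamma_mul_Gamma_add_half (n + 1 / 2)
  have rpow_eq : (2 : ℝ) ^ (1 - 2 * ((n : ℝ) + 1 / 2)) = (4 ^ n)⁻¹ := by
    rw [show 1 - 2 * ((n : ℝ) + 1 / 2) = -(2 * n) by ring, rpow_neg two_pos.le,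
      rpow_mul two_pos.le, rpow_natCast, rpow_two]
    norm_num
  rw [rpow_eq, add_assoc, add_halves, Gamma_nat_eq_factorial,
    show 2 * ((n : ℝ) + 1 / 2) = (2 * n : ℕ) + 1 by push_cast; ring,
    Gamma_nat_eq_factorial] at duplication
  rw [eq_div_iff (by positivity), mul_left_comm, duplication]
  field_simp

theorem beta_nat_add_half_div_factorial (n : ℕ) {β : ℝ} (hβ : -1 < β) :
    beta (n + 1 / 2) (β + 1 / 2) / (2 * n)! =
      beta (1 / 2) (β + 1 / 2) * Gamma (β + 1) / (4 ^ n * n ! * Gamma (n + β + 1)) := by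
  have Gamma_ne_zero := (Gamma_pos_of_pos (neg_lt_iff_pos_add.1 hβ)).ne'
  rw [beta, beta, Gamma_one_half_eq, Gamma_nat_add_half_eq_factorial,
    show (n : ℝ) + 1 / 2 + (β + 1 / 2) = n + β + 1 by ring,
    show (1 : ℝ) / 2 + (β + 1 / 2) = β + 1 by ring]
  field_simp

end Beta

/-- The Gegenbauer weight `(1 - t²)^a` on `(-1, 1)`, extended by zero to the real line; for
`a = β - 1/2` its Fourier transform is a multiple of `ω ↦ η_β(2πω)`. The endpoints are excluded so
that the values there do not depend on conventions for `0 ^ a`. -/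
noncomputable def gegenbauerWeight (a : ℝ) : ℝ → ℝ :=
  (Ioo (-1) 1).indicator fun t ↦ (1 - t ^ 2) ^ a

section GegenbauerWeight

variable {a : ℝ}

theorem gegenbauerWeight_abs (a t : ℝ) : gegenbauerWeight a |t| = gegenbauerWeight a t := by
  simp only [gegenbauerWeight, indicator_apply, mem_Ioo, ← abs_lt, abs_abs, sq_abs]

theorem even_gegenbauerWeight (a : ℝ) : (gegenbauerWeight a).Even := fun t ↦ by
  rw [← gegenbauerWeight_abs, abs_neg, gegenbauerWeight_abs]

theorem gegenbauerWeight_eq_zero {t : ℝ} (ht : 1 < |t|) : gegenbauerWeight a t = 0 :=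
  indicator_of_notMem (s := Ioo (-1) 1) (fun h ↦ ht.not_gt (abs_lt.2 h)) _

theorem gegenbauerWeight_sq (a t : ℝ) : gegenbauerWeight a t ^ 2 = gegenbauerWeight (2 * a) t := by
  by_cases ht : t ∈ Ioo (-1) 1
  · have one_sub_sq_nonneg : 0 ≤ 1 - t ^ 2 := by nlinarith [ht.1, ht.2]
    rw [gegenbauerWeight, gegenbauerWeight, indicator_of_mem ht, indicator_of_mem ht, mul_comm,
      rpow_mul one_sub_sq_nonneg, rpow_two]
  · simp [gegenbauerWeight, ht]

theorem integral_abs_rpow_mul_gegenbauerWeight {u : ℝ} (hu : 0 < u) (ha : -1 < a) :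
    ∫ t, |t| ^ (2 * u - 1) * gegenbauerWeight a t = beta u (a + 1) := by
  let g : ℝ → ℝ := (Iio 1).indicator fun y ↦ y ^ (u - 1) * (1 - y) ^ a
  have substitution {t : ℝ} (ht : 0 < t) :
      2 * (t ^ (2 * u - 1) * gegenbauerWeight a t) = (2 * t ^ ((2 : ℝ) - 1)) • g (t ^ (2 : ℝ)) := by
    have sq_mem_iff : t ^ 2 ∈ Iio 1 ↔ t ∈ Ioo (-1) 1 := by
      rw [mem_Iio, sq_lt_one_iff_abs_lt_one, abs_lt, mem_Ioo]
    have rpow_eq : t ^ (2 * u - 1) = t ^ ((2 : ℝ) - 1) * (t ^ (2 : ℝ)) ^ (u - 1) := by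
      rw [← rpow_mul ht.le, ← rpow_add ht]
      ring_nf
    simp only [g, gegenbauerWeight, indicator_apply, rpow_eq, rpow_two, sq_mem_iff, smul_eq_mul]
    split_ifs <;> ring
  calc ∫ t, |t| ^ (2 * u - 1) * gegenbauerWeight a t
      = 2 * ∫ t in Ioi 0, t ^ (2 * u - 1) * gegenbauerWeight a t := by
        rw [← integral_comp_abs (f := fun t ↦ t ^ (2 * u - 1) * gegenbauerWeight a t)]
        simp only [gegenbauerWeight_abs]
    _ = ∫ t in Ioi 0, (2 * t ^ ((2 : ℝ) - 1)) • g (t ^ (2 : ℝ)) := by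
        rw [← integral_const_mul]
        exact setIntegral_congr_fun measurableSet_Ioi fun t ht ↦ substitution ht
    _ = ∫ y in Ioo 0 1, y ^ (u - 1) * (1 - y) ^ a := by
        rw [integral_comp_rpow_Ioi_of_pos two_pos, setIntegral_indicator measurableSet_Iio,
          Ioi_inter_Iio]
    _ = beta u (a + 1) := by
        simpa using setIntegral_rpow_mul_one_sub_rpow hu (neg_lt_iff_pos_add.1 ha)

theorem integral_pow_mul_gegenbauerWeight (ha : -1 < a) (n : ℕ) :
    ∫ t, t ^ (2 * n) * gegenbauerWeight a t = beta (n + 1 / 2) (a + 1) := by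
  rw [← integral_abs_rpow_mul_gegenbauerWeight (by positivity) ha]
  congr with t
  rw [show 2 * ((n : ℝ) + 1 / 2) - 1 = ((2 * n : ℕ) : ℝ) by push_cast; ring, rpow_natCast,
    (even_two_mul n).pow_abs]

theorem integral_gegenbauerWeight (ha : -1 < a) :
    ∫ t, gegenbauerWeight a t = beta (1 / 2) (a + 1) := by
  simpa using integral_pow_mul_gegenbauerWeight ha 0

theorem integrable_gegenbauerWeight (ha : -1 < a) : Integrable (gegenbauerWeight a) :=
  .of_integral_ne_zero <| by
    rw [integral_gegenbauerWeight ha]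
    exact (beta_pos one_half_pos (neg_lt_iff_pos_add.1 ha)).ne'

theorem memLp_two_gegenbauerWeight (ha : -(1 / 2) < a) : MemLp (gegenbauerWeight a) 2 := by
  rw [memLp_two_iff_integrable_sq (integrable_gegenbauerWeight (by linarith)).aestronglyMeasurable]
  simp only [gegenbauerWeight_sq]
  exact integrable_gegenbauerWeight (by linarith)

end GegenbauerWeight

section Poisson

variable {β : ℝ}

theorem besselEta_abs (β x : ℝ) : besselEta β |x| = besselEta β x := by
  simp only [besselEta, div_pow, (even_two_mul _).pow_abs]

theorem integral_cos_mul_gegenbauerWeight (hβ : -(1 / 2) < β) (x : ℝ) :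
    ∫ t, cos (x * t) * gegenbauerWeight (β - 1 / 2) t =
      beta (1 / 2) (β + 1 / 2) * besselEta β x := by
  have ha : -1 < β - 1 / 2 := by linarith
  have hasSum_moments := hasSum_integral_cos_mul (integrable_gegenbauerWeight ha)
    (fun _ ↦ gegenbauerWeight_eq_zero) x
  rw [← hasSum_moments.tsum_eq, besselEta, ← mul_assoc, ← tsum_mul_left]
  congr with n
  rw [integral_pow_mul_gegenbauerWeight ha, show β - 1 / 2 + 1 = β + 1 / 2 by ring,
    div_mul_eq_mul_div, mul_div_assoc, beta_nat_add_half_div_factorial n (by linarith), div_pow,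
    pow_mul 2 2 n]
  norm_num only
  ring

theorem fourier_gegenbauerWeight (hβ : -(1 / 2) < β) (ω : ℝ) :
    𝓕 (fun t ↦ (gegenbauerWeight (β - 1 / 2) t : ℂ)) ω =
      ((beta (1 / 2) (β + 1 / 2) * besselEta β (2 * π * ω) : ℝ) : ℂ) := by
  rw [fourier_ofReal_of_even (integrable_gegenbauerWeight (by linarith)) (even_gegenbauerWeight _),
    integral_cos_mul_gegenbauerWeight hβ]

theorem integral_besselEta_two_pi_mul_sq (β : ℝ) :
    ∫ ω, besselEta β (2 * π * ω) ^ 2 = (∫ x in Ioi 0, besselEta β x ^ 2) / π := by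
  have integral_univ : ∫ x, besselEta β x ^ 2 = 2 * ∫ x in Ioi 0, besselEta β x ^ 2 := by
    rw [← integral_comp_abs (f := fun x ↦ besselEta β x ^ 2)]
    simp only [besselEta_abs]
  rw [Measure.integral_comp_mul_left (fun x ↦ besselEta β x ^ 2), integral_univ,
    abs_of_pos (by positivity), smul_eq_mul]
  field_simp

theorem beta_sq_mul_integral_besselEta_sq (hβ : 0 < β) :
    beta (1 / 2) (β + 1 / 2) ^ 2 * ∫ x in Ioi 0, besselEta β x ^ 2 = π * beta (1 / 2) (2 * β) := by
  have weight_integrable : Integrable fun t ↦ (gegenbauerWeight (β - 1 / 2) t : ℂ) :=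
    (integrable_gegenbauerWeight (by linarith)).ofReal
  have weight_memLp_two : MemLp (fun t ↦ (gegenbauerWeight (β - 1 / 2) t : ℂ)) 2 :=
    (memLp_two_gegenbauerWeight (by linarith)).ofReal
  have plancherel := integral_sq_norm_fourier_eq weight_integrable weight_memLp_two
  simp only [fourier_gegenbauerWeight (show -(1 / 2) < β by linarith), Complex.norm_real,
    norm_eq_abs, sq_abs, mul_pow, gegenbauerWeight_sq] at plancherel
  rw [integral_const_mul, integral_besselEta_two_pi_mul_sq,
    integral_gegenbauerWeight (by linarith), show 2 * (β - 1 / 2) + 1 = 2 * β by ring,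
    ← mul_div_assoc, div_eq_iff pi_ne_zero] at plancherel
  rw [plancherel, mul_comm]

end Poisson

theorem besselEta_sq_integral_general (β : ℝ) (hβ : 0 < β) :
    (∫ x in Ioi (0 : ℝ), (besselEta β x) ^ 2) =
      2 ^ (8 * β - 3) * β ^ 2 * Gamma β ^ 4 / (π * Gamma (4 * β)) := by
  have beta_add_half_ne_zero := (beta_pos one_half_pos (add_pos hβ one_half_pos)).ne'
  have rpow_mul_rpow_sq : (2 : ℝ) ^ (2 * (2 * β) - 1) * (2 ^ (2 * β - 1)) ^ 2 =
      2 ^ (8 * β - 3) := by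
    rw [← rpow_mul_natCast two_pos.le, ← rpow_add two_pos]
    ring_nf
  calc ∫ x in Ioi (0 : ℝ), (besselEta β x) ^ 2
      = π * beta (1 / 2) (2 * β) / beta (1 / 2) (β + 1 / 2) ^ 2 := by
        rw [eq_div_iff (pow_ne_zero 2 beta_add_half_ne_zero), mul_comm,
          beta_sq_mul_integral_besselEta_sq hβ]
    _ = β ^ 2 / π * (beta (1 / 2) (2 * β) * beta (1 / 2) β ^ 2) := by
        rw [beta_one_half_add_half hβ]
        field_simp
    _ = 2 ^ (8 * β - 3) * β ^ 2 * Gamma β ^ 4 / (π * Gamma (4 * β)) := by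
        rw [beta_one_half_left hβ, beta_one_half_left (mul_pos two_pos hβ), ← rpow_mul_rpow_sq,
          show 2 * (2 * β) = 4 * β by ring]
        field_simp

theorem besselEta_sq_integral (β : ℝ) (hβ : 1 / 2 < β) :
    (∫ x in Set.Ioi (0 : ℝ), (besselEta β x) ^ 2) =
      2 ^ (8 * β - 3) * β ^ 2 * Real.Gamma β ^ 4 / (Real.pi * Real.Gamma (4 * β)) :=
  besselEta_sq_integral_general β (one_half_pos.trans hβ)
end

section
/- The function α ↦ (2^{8α−6}/π) · α²(α−1)²/(4α−3) · Γ(α−1)⁴/Γ(4α−4), defined for α > 1, attains the value 12π at α = 3/2, and 12π is its minimum value on (1, ∞). -/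
/-!
Put `s = α - 1`. By Gauss' multiplication formula for `Γ (4 s)`, the function is a constant times
`exp (F s)`, where `F s = ∑ i, c i * log Γ (s + a i)` has five terms and `∑ i, c i = 0`. Euler's
limit formula for `log Γ` gives `F' s = ∑ₘ K (s + m)` with `K x = -∑ i, c i / (x + a i)`. Now
`x (1 + x) K x` is increasing on `(0, ∞)` and nonnegative at `1`, which makes `x (1 + x) K (x + m)`
increasing for every natural `m`. Hence `x (1 + x) F' x` is increasing, that is, `F` is convex as a
function of `v = log (1 + 1 / x)`, for which `dx / dv = -x (1 + x)`. So it remains to check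
`F' (1 / 2) = 0`, and this follows from the recurrence and the duplication formula of the digamma
function.
-/

open Real Set Filter Topology

theorem convexOn_of_tendsto {E ι : Type*} [AddCommMonoid E] [SMul ℝ E] {s : Set E}
    {l : Filter ι} [l.NeBot] {f : ι → E → ℝ} {g : E → ℝ} (hs : Convex ℝ s)
    (hf : ∀ n, ConvexOn ℝ s (f n)) (hfg : ∀ x ∈ s, Tendsto (f · x) l (𝓝 (g x))) :
    ConvexOn ℝ s g :=
  ⟨hs, fun x hx y hy _ _ hp hq hpq =>
    le_of_tendsto_of_tendsto' (hfg _ (hs hx hy hp hq hpq))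
      (((hfg x hx).const_smul _).add ((hfg y hy).const_smul _))
      fun n => (hf n).2 hx hy hp hq hpq⟩

theorem hasDerivAt_log_Gamma {x : ℝ} (hx : 0 < x) :
    HasDerivAt (fun y => log (Gamma y)) (logDeriv Gamma x) x :=
  (differentiableOn_Gamma_Ioi.differentiableAt (Ioi_mem_nhds hx)).hasDerivAt.log
    (Gamma_pos_of_pos hx).ne'

theorem logDeriv_Gamma_add_one {x : ℝ} (hx : 0 < x) :
    logDeriv Gamma (x + 1) = logDeriv Gamma x + 1 / x := by
  have hlhs : HasDerivAt (fun y => log (Gamma (y + 1))) (logDeriv Gamma (x + 1)) x :=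
    (hasDerivAt_log_Gamma (by positivity)).comp_add_const x 1
  have hrhs : HasDerivAt (fun y => log (Gamma y) + log y) (logDeriv Gamma x + 1 / x) x := by
    simpa using (hasDerivAt_log_Gamma hx).fun_add (hasDerivAt_log hx.ne')
  refine hlhs.unique (hrhs.congr_of_eventuallyEq ?_)
  filter_upwards [Ioi_mem_nhds hx] with y (hy : 0 < y)
  rw [Gamma_add_one hy.ne', log_mul hy.ne' (Gamma_pos_of_pos hy).ne', add_comm]

theorem log_Gamma_add_log_Gamma_add_half {x : ℝ} (hx : 0 < x) :
    log (Gamma x) + log (Gamma (x + 1 / 2)) =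
      log (Gamma (2 * x)) + (1 - 2 * x) * log 2 + log √π := by
  have hΓ : ∀ y : ℝ, 0 < y → Gamma y ≠ 0 := fun y hy => (Gamma_pos_of_pos hy).ne'
  rw [← log_mul (hΓ x hx) (hΓ _ (by positivity)), Gamma_mul_Gamma_add_half,
    log_mul (mul_ne_zero (hΓ _ (by positivity)) (by positivity)) (by positivity),
    log_mul (hΓ _ (by positivity)) (by positivity), log_rpow two_pos]

theorem logDeriv_Gamma_add_logDeriv_Gamma_add_half {x : ℝ} (hx : 0 < x) :
    logDeriv Gamma x + logDeriv Gamma (x + 1 / 2) = 2 * logDeriv Gamma (2 * x) - 2 * log 2 := by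
  have hlhs : HasDerivAt (fun y => log (Gamma y) + log (Gamma (y + 1 / 2)))
      (logDeriv Gamma x + logDeriv Gamma (x + 1 / 2)) x :=
    (hasDerivAt_log_Gamma hx).add ((hasDerivAt_log_Gamma (by positivity)).comp_add_const x _)
  have hdouble : HasDerivAt (fun y : ℝ => 2 * y) 2 x := by
    simpa using (hasDerivAt_id x).const_mul 2
  have hrhs : HasDerivAt (fun y => log (Gamma (2 * y)) + (1 - 2 * y) * log 2 + log √π)
      (2 * logDeriv Gamma (2 * x) - 2 * log 2) x :=
    ((((hasDerivAt_log_Gamma (by positivity)).comp x hdouble).add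
      ((hdouble.const_sub 1).mul_const (log 2))).add_const _).congr_deriv (by ring)
  refine hlhs.unique (hrhs.congr_of_eventuallyEq ?_)
  filter_upwards [Ioi_mem_nhds hx] with y hy using log_Gamma_add_log_Gamma_add_half hy

theorem Gamma_mul_Gamma_add_quarters (x : ℝ) :
    Gamma x * Gamma (x + 1 / 4) * Gamma (x + 1 / 2) * Gamma (x + 3 / 4) =
      Gamma (4 * x) * 2 ^ (5 / 2 - 8 * x) * √π ^ 3 := by
  have dup_add_quarter :
      Gamma (x + 1 / 4) * Gamma (x + 3 / 4) = Gamma (2 * x + 1 / 2) * 2 ^ (1 / 2 - 2 * x) * √π := by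
    convert Gamma_mul_Gamma_add_half (x + 1 / 4) using 3 <;> ring_nf
  have dup_double :
      Gamma (2 * x) * Gamma (2 * x + 1 / 2) = Gamma (4 * x) * 2 ^ (1 - 4 * x) * √π := by
    convert Gamma_mul_Gamma_add_half (2 * x) using 3 <;> ring_nf
  have rpow_split : (2 : ℝ) ^ (5 / 2 - 8 * x) =
      2 ^ (1 - 2 * x) * 2 ^ (1 / 2 - 2 * x) * 2 ^ (1 - 4 * x) := by
    rw [← rpow_add two_pos, ← rpow_add two_pos]
    ring_nf
  calc Gamma x * Gamma (x + 1 / 4) * Gamma (x + 1 / 2) * Gamma (x + 3 / 4)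
      = (Gamma x * Gamma (x + 1 / 2)) * (Gamma (x + 1 / 4) * Gamma (x + 3 / 4)) := by ring
    _ = (Gamma (2 * x) * Gamma (2 * x + 1 / 2)) *
          (2 ^ (1 - 2 * x) * 2 ^ (1 / 2 - 2 * x)) * √π ^ 2 := by
        rw [Gamma_mul_Gamma_add_half, dup_add_quarter]
        ring
    _ = Gamma (4 * x) * 2 ^ (5 / 2 - 8 * x) * √π ^ 3 := by
        rw [dup_double, rpow_split]
        ring

theorem Gamma_pow_four_div_Gamma_four_mul {x : ℝ} (hx : 0 < x) :
    Gamma x ^ 4 / Gamma (4 * x) = 2 ^ (5 / 2 - 8 * x) * √π ^ 3 * Gamma x ^ 3 /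
      (Gamma (x + 1 / 4) * Gamma (x + 1 / 2) * Gamma (x + 3 / 4)) := by
  have hΓ : ∀ y : ℝ, 0 < y → Gamma y ≠ 0 := fun _ hy => (Gamma_pos_of_pos hy).ne'
  have hdenom : Gamma (x + 1 / 4) * Gamma (x + 1 / 2) * Gamma (x + 3 / 4) ≠ 0 :=
    mul_ne_zero (mul_ne_zero (hΓ _ (by positivity)) (hΓ _ (by positivity))) (hΓ _ (by positivity))
  rw [div_eq_div_iff (hΓ _ (by positivity)) hdenom]
  linear_combination Gamma x ^ 3 * Gamma_mul_Gamma_add_quarters x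

/-- The inverse of `x ↦ log (1 + 1 / x)` as a map of `(0, ∞)` to itself. It is the change of
variable in which sums of logarithms of Gamma values are shown to be convex. -/
noncomputable def boseEinstein (v : ℝ) : ℝ := (exp v - 1)⁻¹

theorem boseEinstein_pos {v : ℝ} (hv : 0 < v) : 0 < boseEinstein v :=
  inv_pos.2 (sub_pos.2 (one_lt_exp_iff.2 hv))

theorem boseEinstein_log_one_add_inv {x : ℝ} (hx : 0 < x) :
    boseEinstein (log (1 + x⁻¹)) = x := by
  rw [boseEinstein, exp_log (by positivity), add_sub_cancel_left, inv_inv]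

theorem antitoneOn_boseEinstein : AntitoneOn boseEinstein (Ioi 0) := fun _ hu _ _ huv =>
  inv_anti₀ (sub_pos.2 (one_lt_exp_iff.2 hu)) (sub_le_sub_right (exp_le_exp.2 huv) 1)

theorem hasDerivAt_boseEinstein {v : ℝ} (hv : 0 < v) :
    HasDerivAt boseEinstein (-(boseEinstein v * (1 + boseEinstein v))) v := by
  have hne : exp v - 1 ≠ 0 := (sub_pos.2 (one_lt_exp_iff.2 hv)).ne'
  refine (((hasDerivAt_exp v).sub_const 1).inv hne).congr_deriv ?_
  rw [boseEinstein]
  field_simp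
  ring

theorem convexOn_comp_boseEinstein {f f' : ℝ → ℝ} (hf : ∀ x, 0 < x → HasDerivAt f (f' x) x)
    (hmono : MonotoneOn (fun x => x * (1 + x) * f' x) (Ioi 0)) :
    ConvexOn ℝ (Ioi 0) (f ∘ boseEinstein) := by
  have hderiv : ∀ v ∈ Ioi (0 : ℝ), HasDerivAt (f ∘ boseEinstein)
      (f' (boseEinstein v) * -(boseEinstein v * (1 + boseEinstein v))) v := fun v hv =>
    (hf _ (boseEinstein_pos hv)).comp v (hasDerivAt_boseEinstein hv)
  refine MonotoneOn.convexOn_of_deriv (convex_Ioi 0)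
    (fun v hv => (hderiv v hv).continuousAt.continuousWithinAt) ?_ ?_ <;> rw [interior_Ioi]
  · exact fun v hv => (hderiv v hv).differentiableAt.differentiableWithinAt
  · intro u hu v hv huv
    have := hmono (boseEinstein_pos hv) (boseEinstein_pos hu)
      (antitoneOn_boseEinstein hu hv huv)
    rw [(hderiv u hu).deriv, (hderiv v hv).deriv]
    linarith

theorem monotoneOn_div_add_const {b : ℝ} (hb : 0 ≤ b) :
    MonotoneOn (fun x => x / (x + b)) (Ioi 0) := by
  intro x (hx : 0 < x) y (hy : 0 < y) hxy
  rw [div_le_div_iff₀ (by positivity) (by positivity)]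
  nlinarith

theorem monotoneOn_mul_one_add_mul_comp_add_natCast {K : ℝ → ℝ}
    (hmono : MonotoneOn (fun x => x * (1 + x) * K x) (Ioi 0)) (hone : 0 ≤ K 1) (m : ℕ) :
    MonotoneOn (fun x => x * (1 + x) * K (x + m)) (Ioi 0) := by
  rcases m.eq_zero_or_pos with rfl | hm
  · simpa using hmono
  have one_le_m : (1 : ℝ) ≤ m := by exact_mod_cast hm
  have hfactor : MonotoneOn (fun x : ℝ => x / (x + m) * ((1 + x) / (1 + x + m))) (Ioi 0) :=
    (monotoneOn_div_add_const m.cast_nonneg).mul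
      (fun x (hx : 0 < x) y (hy : 0 < y) hxy => monotoneOn_div_add_const m.cast_nonneg
        (show 0 < 1 + x by positivity) (show 0 < 1 + y by positivity) (by linarith))
      (fun x (hx : 0 < x) => by positivity) (fun x (hx : 0 < x) => by positivity)
  have hshift : MonotoneOn (fun x : ℝ => (x + m) * (1 + (x + m)) * K (x + m)) (Ioi 0) :=
    fun x (hx : 0 < x) y (hy : 0 < y) hxy =>
      hmono (show 0 < x + m by positivity) (show 0 < y + m by positivity) (by linarith)
  have hshift_nonneg : ∀ x ∈ Ioi (0 : ℝ), 0 ≤ (x + m) * (1 + (x + m)) * K (x + m) :=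
    fun x (hx : 0 < x) => (by positivity : 0 ≤ 1 * (1 + 1) * K 1).trans
      (hmono (mem_Ioi.2 one_pos) (show 0 < x + m by positivity) (by linarith))
  refine (hfactor.mul hshift (fun x (hx : 0 < x) => by positivity) hshift_nonneg).congr ?_
  intro x (hx : 0 < x)
  have : 1 + x + m ≠ 0 := by positivity
  have : x + m ≠ 0 := by positivity
  simp only [Pi.mul_apply]
  field_simp
  ring

section LogGammaSum

variable {ι : Type*} [Fintype ι]

/-- The logarithm of the weighted product `∏ i, Γ (x + a i) ^ c i` of Gamma values. -/
noncomputable def logGammaSum (c a : ι → ℝ) (x : ℝ) : ℝ := ∑ i, c i * log (Gamma (x + a i))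

/-- The function `K` for which `∑ₘ K (x + m)` is the derivative of `logGammaSum c a` at `x` when
the weights `c` add up to zero. -/
noncomputable def logGammaSumKernel (c a : ι → ℝ) (x : ℝ) : ℝ := -∑ i, c i / (x + a i)

variable {c a : ι → ℝ}

theorem exp_logGammaSum (ha : ∀ i, 0 ≤ a i) {x : ℝ} (hx : 0 < x) :
    exp (logGammaSum c a x) = ∏ i, Gamma (x + a i) ^ c i := by
  rw [logGammaSum, exp_sum]
  refine Finset.prod_congr rfl fun i _ => ?_
  rw [rpow_def_of_pos (Gamma_pos_of_pos (add_pos_of_pos_of_nonneg hx (ha i))), mul_comm]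

theorem hasDerivAt_logGammaSum (ha : ∀ i, 0 ≤ a i) {x : ℝ} (hx : 0 < x) :
    HasDerivAt (logGammaSum c a) (∑ i, c i * logDeriv Gamma (x + a i)) x :=
  HasDerivAt.fun_sum fun i _ =>
    ((hasDerivAt_log_Gamma (add_pos_of_pos_of_nonneg hx (ha i))).comp_add_const x _).const_mul _

theorem hasDerivAt_neg_sum_mul_log (ha : ∀ i, 0 ≤ a i) {x : ℝ} (hx : 0 < x) :
    HasDerivAt (fun y => -∑ i, c i * log (y + a i)) (logGammaSumKernel c a x) x :=
  (HasDerivAt.fun_sum fun i _ =>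
    ((((hasDerivAt_id x).add_const (a i)).log
      (add_pos_of_pos_of_nonneg hx (ha i)).ne').const_mul (c i)).congr_deriv
        (mul_one_div _ _)).neg

theorem tendsto_logGammaSum (hc : ∑ i, c i = 0) (ha : ∀ i, 0 ≤ a i) {x : ℝ} (hx : 0 < x) :
    Tendsto (fun n : ℕ => (∑ m ∈ Finset.range (n + 1), -∑ i, c i * log (x + m + a i))
      + (∑ i, c i * a i) * log n) atTop (𝓝 (logGammaSum c a x)) := by
  have hlim : Tendsto (fun n => ∑ i, c i * BohrMollerup.logGammaSeq (x + a i) n) atTop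
      (𝓝 (logGammaSum c a x)) :=
    tendsto_finsetSum _ fun i _ =>
      (BohrMollerup.tendsto_log_gamma (add_pos_of_pos_of_nonneg hx (ha i))).const_mul (c i)
  refine hlim.congr fun n => ?_
  calc ∑ i, c i * BohrMollerup.logGammaSeq (x + a i) n
      = ∑ i, (c i * (x * log n + log n.factorial) + c i * a i * log n
          - ∑ m ∈ Finset.range (n + 1), c i * log (x + m + a i)) := by
        refine Finset.sum_congr rfl fun i _ => ?_
        simp only [BohrMollerup.logGammaSeq, ← Finset.mul_sum, add_right_comm x (a i)]
        ring
    _ = _ := by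
        rw [Finset.sum_sub_distrib, Finset.sum_add_distrib, ← Finset.sum_mul, ← Finset.sum_mul, hc,
          Finset.sum_comm, Finset.sum_neg_distrib]
        ring

theorem convexOn_logGammaSum_comp_boseEinstein (hc : ∑ i, c i = 0) (ha : ∀ i, 0 ≤ a i)
    (hmono : MonotoneOn (fun x => x * (1 + x) * logGammaSumKernel c a x) (Ioi 0))
    (hone : 0 ≤ logGammaSumKernel c a 1) :
    ConvexOn ℝ (Ioi 0) (logGammaSum c a ∘ boseEinstein) := by
  refine convexOn_of_tendsto (convex_Ioi 0) (fun n : ℕ => ?_)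
    fun v hv => tendsto_logGammaSum hc ha (boseEinstein_pos hv)
  refine convexOn_comp_boseEinstein
    (f := fun x => (∑ m ∈ Finset.range (n + 1), -∑ i, c i * log (x + m + a i))
      + (∑ i, c i * a i) * log n)
    (f' := fun x => ∑ m ∈ Finset.range (n + 1), logGammaSumKernel c a (x + m)) ?_ ?_
  · exact fun x hx => (HasDerivAt.fun_sum fun m _ => (hasDerivAt_neg_sum_mul_log ha
      (add_pos_of_pos_of_nonneg hx m.cast_nonneg)).comp_add_const x _).add_const _
  · intro x hx y hy hxy
    simp only [Finset.mul_sum]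
    exact Finset.sum_le_sum fun m _ =>
      monotoneOn_mul_one_add_mul_comp_add_natCast hmono hone m hx hy hxy

theorem isMinOn_logGammaSum (hc : ∑ i, c i = 0) (ha : ∀ i, 0 ≤ a i)
    (hmono : MonotoneOn (fun x => x * (1 + x) * logGammaSumKernel c a x) (Ioi 0))
    (hone : 0 ≤ logGammaSumKernel c a 1) {x₀ : ℝ} (hx₀ : 0 < x₀)
    (hcrit : ∑ i, c i * logDeriv Gamma (x₀ + a i) = 0) :
    IsMinOn (logGammaSum c a) (Ioi 0) x₀ := by
  have hv : ∀ x : ℝ, 0 < x → 0 < log (1 + x⁻¹) := fun x hx => log_pos (by simpa using hx)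
  have hderiv : HasDerivAt (logGammaSum c a ∘ boseEinstein) 0 (log (1 + x₀⁻¹)) := by
    have := hasDerivAt_logGammaSum (c := c) ha (boseEinstein_pos (hv x₀ hx₀))
    refine (this.comp _ (hasDerivAt_boseEinstein (hv x₀ hx₀))).congr_deriv ?_
    rw [boseEinstein_log_one_add_inv hx₀, hcrit, zero_mul]
  have hconv := convexOn_logGammaSum_comp_boseEinstein hc ha hmono hone
  have hmin := hconv.isMinOn_of_rightDeriv_eq_zero (by simpa using hv x₀ hx₀)
    (hderiv.hasDerivWithinAt.derivWithin (uniqueDiffWithinAt_Ioi _))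
  intro x (hx : 0 < x)
  simpa [boseEinstein_log_one_add_inv hx, boseEinstein_log_one_add_inv hx₀] using! hmin (hv x hx)

end LogGammaSum

/-- The second moment `∫₀^∞ η_α(x/2)² x² dx` in closed form. -/
noncomputable def secondMoment (α : ℝ) : ℝ :=
  (2 ^ (8 * α - 6) / π) * (α ^ 2 * (α - 1) ^ 2 / (4 * α - 3)) *
    (Gamma (α - 1) ^ 4 / Gamma (4 * α - 4))

/-- The exponents in `Γ(s + 2)² Γ(s) / (Γ(s + 5/4) Γ(s + 1/2) Γ(s + 3/4))`, to which the second
moment at `α = s + 1` is proportional. -/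
def secondMomentWeight : Fin 5 → ℝ := ![2, 1, -1, -1, -1]

/-- The shifts in `Γ(s + 2)² Γ(s) / (Γ(s + 5/4) Γ(s + 1/2) Γ(s + 3/4))`, to which the second
moment at `α = s + 1` is proportional. -/
noncomputable def secondMomentShift : Fin 5 → ℝ := ![2, 0, 5 / 4, 1 / 2, 3 / 4]

theorem secondMomentShift_nonneg (i : Fin 5) : 0 ≤ secondMomentShift i := by
  fin_cases i <;> norm_num [secondMomentShift]

theorem sum_secondMomentWeight_mul (f : ℝ → ℝ) :
    ∑ i, secondMomentWeight i * f (secondMomentShift i) =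
      2 * f 2 + f 0 - f (5 / 4) - f (1 / 2) - f (3 / 4) := by
  simp only [secondMomentWeight, secondMomentShift, Fin.sum_univ_five, Matrix.cons_val]
  ring

theorem sum_secondMomentWeight : ∑ i, secondMomentWeight i = 0 := by
  have := sum_secondMomentWeight_mul fun _ => 1
  norm_num at this
  exact this

theorem secondMoment_three_halves : secondMoment (3 / 2) = 12 * π := by
  have sqrt_pi_pow_four : √π ^ 4 = π ^ 2 := by
    rw [show √π ^ 4 = (√π ^ 2) ^ 2 by ring, sq_sqrt pi_pos.le]
  rw [secondMoment, show (3 / 2 : ℝ) - 1 = 1 / 2 by norm_num,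
    show 4 * (3 / 2 : ℝ) - 4 = 2 by norm_num, show 8 * (3 / 2 : ℝ) - 6 = (6 : ℕ) by norm_num,
    rpow_natCast, Gamma_two, Gamma_one_half_eq, sqrt_pi_pow_four]
  field_simp
  norm_num

theorem exp_logGammaSum_secondMoment {s : ℝ} (hs : 0 < s) :
    exp (logGammaSum secondMomentWeight secondMomentShift s) =
      Gamma (s + 2) ^ 2 * Gamma s /
        (Gamma (s + 5 / 4) * Gamma (s + 1 / 2) * Gamma (s + 3 / 4)) := by
  rw [exp_logGammaSum secondMomentShift_nonneg hs]
  simp only [secondMomentWeight, secondMomentShift, Fin.prod_univ_five, Matrix.cons_val, add_zero,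
    rpow_ofNat, rpow_one, rpow_neg_one]
  ring

theorem secondMoment_add_one {s : ℝ} (hs : 0 < s) :
    secondMoment (s + 1) =
      2 ^ (5 / 2 : ℝ) * √π * exp (logGammaSum secondMomentWeight secondMomentShift s) := by
  have gamma_add_two : Gamma (s + 2) = (s + 1) * (s * Gamma s) := by
    rw [← Gamma_add_one hs.ne', ← Gamma_add_one (by positivity), add_assoc, one_add_one_eq_two]
  have gamma_add_five_quarters : Gamma (s + 5 / 4) = (s + 1 / 4) * Gamma (s + 1 / 4) := by
    rw [← Gamma_add_one (by positivity), add_assoc]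
    norm_num
  have rpow_mul_rpow : (2 : ℝ) ^ (8 * s + 2) * 2 ^ (5 / 2 - 8 * s) = 4 * 2 ^ (5 / 2 : ℝ) := by
    rw [← rpow_add two_pos, show (4 : ℝ) = 2 ^ (2 : ℝ) by norm_num, ← rpow_add two_pos]
    ring_nf
  have sqrt_pi_pow_three : √π ^ 3 = π * √π := by rw [pow_succ, sq_sqrt pi_pos.le]
  calc secondMoment (s + 1)
      = 2 ^ (8 * s + 2) / π * ((s + 1) ^ 2 * s ^ 2 / (4 * s + 1)) *
          (Gamma s ^ 4 / Gamma (4 * s)) := by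
        rw [secondMoment]
        ring_nf
    _ = (2 ^ (8 * s + 2) * 2 ^ (5 / 2 - 8 * s)) * (√π ^ 3 / π) / 4 *
          (((s + 1) * (s * Gamma s)) ^ 2 * Gamma s /
            ((s + 1 / 4) * Gamma (s + 1 / 4) * Gamma (s + 1 / 2) * Gamma (s + 3 / 4))) := by
        rw [Gamma_pow_four_div_Gamma_four_mul hs]
        field_simp
    _ = 2 ^ (5 / 2 : ℝ) * √π * exp (logGammaSum secondMomentWeight secondMomentShift s) := by
        rw [rpow_mul_rpow, sqrt_pi_pow_three, exp_logGammaSum_secondMoment hs, gamma_add_two,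
          gamma_add_five_quarters]
        field_simp

theorem logGammaSumKernel_secondMoment (x : ℝ) :
    logGammaSumKernel secondMomentWeight secondMomentShift x =
      1 / (x + 5 / 4) + 1 / (x + 1 / 2) + 1 / (x + 3 / 4) - 2 / (x + 2) - 1 / x := by
  simp only [logGammaSumKernel, div_eq_mul_inv]
  rw [sum_secondMomentWeight_mul fun t => (x + t)⁻¹]
  ring_nf

theorem mul_one_add_mul_logGammaSumKernel_secondMoment {x : ℝ} (hx : 0 < x) :
    x * (1 + x) * logGammaSumKernel secondMomentWeight secondMomentShift x =
      3 / 2 - 1 / 4 / (x + 1 / 2) - 3 / 16 / (x + 3 / 4)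
        - (4 / (x + 2) - 5 / 16 / (x + 5 / 4)) := by
  rw [logGammaSumKernel_secondMoment]
  field_simp
  ring

theorem monotoneOn_mul_one_add_mul_logGammaSumKernel_secondMoment :
    MonotoneOn (fun x => x * (1 + x) * logGammaSumKernel secondMomentWeight secondMomentShift x)
      (Ioi 0) := by
  intro x (hx : 0 < x) y (hy : 0 < y) hxy
  have hpair : 4 / (y + 2) - 5 / 16 / (y + 5 / 4) ≤ 4 / (x + 2) - 5 / 16 / (x + 5 / 4) := by
    have hdiff : 4 / (x + 2) - 5 / 16 / (x + 5 / 4) - (4 / (y + 2) - 5 / 16 / (y + 5 / 4)) =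
        (y - x) * (59 * x * y + 70 * (x + y) + 80) /
          (16 * ((x + 2) * (x + 5 / 4) * (y + 2) * (y + 5 / 4))) := by
      field_simp
      ring
    have := sub_nonneg.2 hxy
    rw [← sub_nonneg, hdiff]
    positivity
  simp only [mul_one_add_mul_logGammaSumKernel_secondMoment hx,
    mul_one_add_mul_logGammaSumKernel_secondMoment hy]
  gcongr

theorem sum_secondMomentWeight_mul_logDeriv_Gamma :
    ∑ i, secondMomentWeight i * logDeriv Gamma (1 / 2 + secondMomentShift i) = 0 := by
  rw [sum_secondMomentWeight_mul fun t => logDeriv Gamma (1 / 2 + t)]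
  have dup_half := logDeriv_Gamma_add_logDeriv_Gamma_add_half (x := 1 / 2) (by norm_num)
  have dup_three_quarters := logDeriv_Gamma_add_logDeriv_Gamma_add_half (x := 3 / 4) (by norm_num)
  have rec_three_quarters := logDeriv_Gamma_add_one (x := 3 / 4) (by norm_num)
  have rec_three_halves := logDeriv_Gamma_add_one (x := 3 / 2) (by norm_num)
  norm_num at dup_half dup_three_quarters rec_three_quarters rec_three_halves ⊢
  linarith

theorem secondMoment_three_halves_le {α : ℝ} (hα : 1 < α) :
    secondMoment (3 / 2) ≤ secondMoment α := by
  have hs : 0 < α - 1 := sub_pos.2 hα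
  have hmin := isMinOn_logGammaSum sum_secondMomentWeight secondMomentShift_nonneg
    monotoneOn_mul_one_add_mul_logGammaSumKernel_secondMoment
    (by rw [logGammaSumKernel_secondMoment]; norm_num) one_half_pos
    sum_secondMomentWeight_mul_logDeriv_Gamma
  rw [show (3 / 2 : ℝ) = 1 / 2 + 1 by norm_num, ← sub_add_cancel α 1,
    secondMoment_add_one one_half_pos, secondMoment_add_one hs]
  gcongr
  exact hmin hs

theorem second_moment_min :
    (2 ^ (8 * (3 / 2 : ℝ) - 6) / Real.pi) *
        ((3 / 2 : ℝ) ^ 2 * ((3 / 2 : ℝ) - 1) ^ 2 / (4 * (3 / 2 : ℝ) - 3)) *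
        (Real.Gamma ((3 / 2 : ℝ) - 1) ^ 4 / Real.Gamma (4 * (3 / 2 : ℝ) - 4)) =
      12 * Real.pi ∧
    ∀ α : ℝ, 1 < α →
      12 * Real.pi ≤
        (2 ^ (8 * α - 6) / Real.pi) * (α ^ 2 * (α - 1) ^ 2 / (4 * α - 3)) *
          (Real.Gamma (α - 1) ^ 4 / Real.Gamma (4 * α - 4)) :=
  ⟨secondMoment_three_halves, fun _ hα =>
    secondMoment_three_halves.ge.trans (secondMoment_three_halves_le hα)⟩
end

section
/- lim_{R→∞} R⁴ ∫₀^∞ [sin²(πRx)/(1−(Rx)²)] · [x·tanh(πx)/(Rx)²] dx = (π²/2) ∫₀^∞ (sinh(x)cosh(x) − x)/(x³ cosh²(x)) dx, and this limit is strictly greater than 4.2071. -/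
open Real Filter

/-!
Put `K u = sin² (π u) / (1 - u²)` and `g x = (π x - tanh (π x)) / x³`. Since
`u² K u = K u - sin² (π u)`, the integrand multiplied by `R⁴` equals
`π R² K (R x) + sin² (π R x) g x - K (R x) g x`. The first term has integral zero, because `K` is a
difference of two shifts of the odd function `sin² (π v) / v`. By the Riemann–Lebesgue lemma the
second one contributes `(∫ g) / 2` in the limit, and by dominated convergence the third one
contributes nothing. An integration by parts turns `∫ g` into the integral of the statement.

Integrating the partial fraction expansion of `tanh` term by term evaluates the limit as
`4 ∑ (2 k + 1)⁻³ = 7 ζ(3) / 2`. This exceeds `4.2071` by only about `10⁻⁴`, and sixty terms of the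
series suffice.
-/

open Set MeasureTheory
open scoped Topology

/-! ### Limits of integrals -/

theorem integrableOn_of_abs_le_inv_one_add_sq {f : ℝ → ℝ} {s : Set ℝ} {C : ℝ}
    (hs : MeasurableSet s) (hf : AEStronglyMeasurable f (volume.restrict s))
    (hC : ∀ x ∈ s, |f x| ≤ C * (1 + x ^ 2)⁻¹) : IntegrableOn f s :=
  (integrable_inv_one_add_sq.const_mul C).integrableOn.mono' hf
    ((ae_restrict_iff' hs).2 (Eventually.of_forall hC))

section Window

variable {E : Type*} [NormedAddCommGroup E] [NormedSpace ℝ E] {f : ℝ → E}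

theorem tendsto_intervalIntegral_window_atTop (hf : Tendsto f atTop (𝓝 0)) (a : ℝ) :
    Tendsto (fun T => ∫ x in (T - a)..(T + a), f x) atTop (𝓝 0) := by
  rw [NormedAddGroup.tendsto_nhds_zero] at hf ⊢
  intro ε hε
  have hpos : 0 < 2 * |a| + 1 := by positivity
  obtain ⟨N, hN⟩ := eventually_atTop.1 (hf _ (div_pos hε hpos))
  filter_upwards [eventually_ge_atTop (N + |a|)] with T hT
  have hbound : ‖∫ x in (T - a)..(T + a), f x‖ ≤ ε / (2 * |a| + 1) * |T + a - (T - a)| := by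
    refine intervalIntegral.norm_integral_le_of_norm_le_const fun x hx => (hN x ?_).le
    have hlow : T - |a| ≤ min (T - a) (T + a) :=
      le_min (by linarith [le_abs_self a]) (by linarith [neg_abs_le a])
    linarith [hx.1]
  calc ‖∫ x in (T - a)..(T + a), f x‖ ≤ ε / (2 * |a| + 1) * |T + a - (T - a)| := hbound
    _ = ε * ((2 * |a|) / (2 * |a| + 1)) := by
        rw [show T + a - (T - a) = 2 * a by ring, abs_mul, abs_two]; ring
    _ < ε := mul_lt_of_lt_one_right hε ((div_lt_one hpos).2 (lt_add_one _))

theorem intervalIntegral_neg_self_eq_zero_of_odd (hf : f.Odd) (a : ℝ) :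
    ∫ x in -a..a, f x = 0 := by
  have h := intervalIntegral.integral_comp_neg (a := -a) (b := a) f
  simp only [hf.eq, intervalIntegral.integral_neg, neg_neg] at h
  have : IsAddTorsionFree E := .of_isTorsionFree ℝ E
  exact self_eq_neg.1 h.symm

-- The integral telescopes to the difference of the windows of radius `a` around `T` and around `0`.
theorem tendsto_integral_comp_add_sub_comp_sub_of_odd (hcont : Continuous f) (hodd : f.Odd)
    (hlim : Tendsto f atTop (𝓝 0)) (a : ℝ) :
    Tendsto (fun T => ∫ u in 0..T, (f (u + a) - f (u - a))) atTop (𝓝 0) := by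
  refine (tendsto_intervalIntegral_window_atTop hlim a).congr fun T => ?_
  have hint (b c : ℝ) : IntervalIntegrable f volume b c := hcont.intervalIntegrable b c
  have hadd : IntervalIntegrable (fun u => f (u + a)) volume 0 T :=
    (hcont.comp (continuous_add_const a)).intervalIntegrable _ _
  have hsub : IntervalIntegrable (fun u => f (u - a)) volume 0 T :=
    (hcont.comp (continuous_sub_right a)).intervalIntegrable _ _
  rw [intervalIntegral.integral_sub hadd hsub,
    intervalIntegral.integral_comp_add_right, intervalIntegral.integral_comp_sub_right,
    intervalIntegral.integral_interval_sub_interval_comm' (hint _ _) (hint _ _) (hint _ _),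
    zero_add, zero_sub, intervalIntegral_neg_self_eq_zero_of_odd hodd, sub_zero]

end Window

theorem tendsto_integral_Ioi_comp_mul_left_mul {φ g : ℝ → ℝ} {C l : ℝ} (hφ : Measurable φ)
    (hC : ∀ u, |φ u| ≤ C) (hlim : Tendsto φ atTop (𝓝 l)) (hg : IntegrableOn g (Ioi 0)) :
    Tendsto (fun R => ∫ x in Ioi 0, φ (R * x) * g x) atTop (𝓝 (l * ∫ x in Ioi 0, g x)) := by
  rw [← integral_const_mul]
  refine tendsto_integral_filter_of_dominated_convergence (fun x => C * |g x|) ?_ ?_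
    (hg.abs.const_mul C) ?_
  · exact Eventually.of_forall fun R =>
      (hφ.comp (measurable_const_mul R)).aestronglyMeasurable.mul hg.aestronglyMeasurable
  · refine Eventually.of_forall fun R => Eventually.of_forall fun x => ?_
    rw [norm_mul]
    exact mul_le_mul_of_nonneg_right (hC _) (abs_nonneg _)
  · refine (ae_restrict_iff' measurableSet_Ioi).2 (Eventually.of_forall fun x hx => ?_)
    exact (hlim.comp (tendsto_id.atTop_mul_const hx)).mul_const (g x)

theorem tendsto_integral_cos_two_pi_mul_mul {g : ℝ → ℝ} (hg : Integrable g) :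
    Tendsto (fun R => ∫ x, cos (2 * π * (R * x)) * g x) atTop (𝓝 0) := by
  have hfourier := (Complex.continuous_re.tendsto 0).comp
    ((Real.tendsto_integral_exp_smul_cocompact fun x => (g x : ℂ)).mono_left atTop_le_cocompact)
  refine hfourier.congr fun R => ?_
  have hint : Integrable fun x : ℝ => Real.fourierChar (-(x * R)) • (g x : ℂ) := by
    simpa [mul_comm] using
      (Real.fourierIntegral_convergent_iff (μ := volume) R).2 (hg.ofReal (𝕜 := ℂ))
  rw [Function.comp_apply, ← Complex.reCLM_apply, ← Complex.reCLM.integral_comp_comm hint]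
  refine integral_congr_ae (Eventually.of_forall fun x => ?_)
  simp only [Complex.reCLM_apply, Circle.smul_def, Real.fourierChar_apply, smul_eq_mul,
    Complex.re_mul_ofReal, Complex.exp_ofReal_mul_I_re]
  rw [← cos_neg]
  ring_nf

theorem tendsto_setIntegral_sin_sq_pi_mul_mul {g : ℝ → ℝ} {s : Set ℝ} (hs : MeasurableSet s)
    (hg : IntegrableOn g s) :
    Tendsto (fun R => ∫ x in s, sin (π * (R * x)) ^ 2 * g x) atTop (𝓝 ((∫ x in s, g x) / 2)) := by
  have hcos : Tendsto (fun R => ∫ x in s, cos (2 * π * (R * x)) * g x) atTop (𝓝 0) := by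
    refine (tendsto_integral_cos_two_pi_mul_mul (hg.integrable_indicator hs)).congr fun R => ?_
    rw [← integral_indicator hs]
    simp only [indicator_mul_right]
  have hlim : Tendsto (fun R => ((∫ x in s, g x) - ∫ x in s, cos (2 * π * (R * x)) * g x) / 2)
      atTop (𝓝 ((∫ x in s, g x) / 2)) := by
    simpa only [sub_zero] using (hcos.const_sub (∫ x in s, g x)).div_const 2
  refine hlim.congr fun R => ?_
  have hint : IntegrableOn (fun x => cos (2 * π * (R * x)) * g x) s :=
    hg.bdd_mul (c := 1) (by fun_prop) (Eventually.of_forall fun x => abs_cos_le_one _)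
  rw [← integral_sub hg hint, ← integral_div]
  refine integral_congr_ae (Eventually.of_forall fun x => ?_)
  simp only [sin_sq_eq_half_sub, mul_assoc]
  ring

/-! ### The oscillating kernel -/

/-- The odd function `sin² (π v) / v`. The convention `x / 0 = 0` gives it the value `0` at the
removable singularity `v = 0`, so that it is continuous. -/
noncomputable def sinSqDiv (v : ℝ) : ℝ := sin (π * v) ^ 2 / v

theorem sinSqDiv_eq_mul_sinc (v : ℝ) : sinSqDiv v = π * sin (π * v) * sinc (π * v) := by
  rcases eq_or_ne v 0 with rfl | hv
  · simp [sinSqDiv]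
  · rw [sinSqDiv, sinc_of_ne_zero (mul_ne_zero pi_ne_zero hv)]
    field_simp

theorem continuous_sinSqDiv : Continuous sinSqDiv := by
  rw [funext sinSqDiv_eq_mul_sinc]
  fun_prop

theorem odd_sinSqDiv : sinSqDiv.Odd := fun v => by
  simp only [sinSqDiv, mul_neg, sin_neg, neg_sq, div_neg]

theorem abs_sinSqDiv_le_pi (v : ℝ) : |sinSqDiv v| ≤ π := by
  rw [sinSqDiv_eq_mul_sinc, abs_mul, abs_mul, abs_of_pos pi_pos, mul_assoc]
  exact mul_le_of_le_one_right pi_nonneg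
    (mul_le_one₀ (abs_sin_le_one _) (abs_nonneg _) (abs_sinc_le_one _))

theorem tendsto_sinSqDiv_atTop : Tendsto sinSqDiv atTop (𝓝 0) := by
  refine squeeze_zero' (g := fun v => v⁻¹) ?_ ?_ tendsto_inv_atTop_zero
  all_goals filter_upwards [eventually_gt_atTop 0] with v hv
  · exact div_nonneg (sq_nonneg _) hv.le
  · rw [sinSqDiv, inv_eq_one_div]
    exact div_le_div_of_nonneg_right (sin_sq_le_one _) hv.le

/-- The oscillating kernel `sin² (π u) / (1 - u²)` of the limit theorem. The convention `x / 0 = 0`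
gives it the value `0` at the removable singularities `u = ±1`, so that it is continuous. -/
noncomputable def sinSqKernel (u : ℝ) : ℝ := sin (π * u) ^ 2 / (1 - u ^ 2)

theorem sin_pi_mul_eq_zero_of_sq_eq_one {u : ℝ} (hu : u ^ 2 = 1) : sin (π * u) = 0 := by
  rcases sq_eq_one_iff.1 hu with rfl | rfl <;> simp

theorem sinSqKernel_eq_sub_sinSqDiv (u : ℝ) :
    sinSqKernel u = (sinSqDiv (u + 1) - sinSqDiv (u - 1)) / 2 := by
  rw [sinSqDiv, sinSqDiv, mul_add, mul_sub, mul_one, sin_add_pi, sin_sub_pi, sinSqKernel, neg_sq]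
  by_cases hu : u ^ 2 = 1
  · simp [sin_pi_mul_eq_zero_of_sq_eq_one hu]
  · have hfactor : (u + 1) * (u - 1) ≠ 0 := by
      rwa [show (u + 1) * (u - 1) = u ^ 2 - 1 by ring, sub_ne_zero]
    obtain ⟨hplus, hminus⟩ := mul_ne_zero_iff.1 hfactor
    rw [show 1 - u ^ 2 = -((u + 1) * (u - 1)) by ring]
    field_simp
    ring

theorem sq_mul_sinSqKernel (u : ℝ) :
    u ^ 2 * sinSqKernel u = sinSqKernel u - sin (π * u) ^ 2 := by
  rw [sinSqKernel]
  by_cases hu : u ^ 2 = 1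
  · simp [sin_pi_mul_eq_zero_of_sq_eq_one hu]
  · have hne : 1 - u ^ 2 ≠ 0 := sub_ne_zero.2 (Ne.symm hu)
    field_simp
    ring

theorem continuous_sinSqKernel : Continuous sinSqKernel := by
  rw [funext sinSqKernel_eq_sub_sinSqDiv]
  have := continuous_sinSqDiv
  fun_prop

theorem abs_sinSqKernel_le_pi (u : ℝ) : |sinSqKernel u| ≤ π := by
  rw [sinSqKernel_eq_sub_sinSqDiv, abs_div, abs_two, div_le_iff₀ two_pos]
  linarith [abs_sub (sinSqDiv (u + 1)) (sinSqDiv (u - 1)), abs_sinSqDiv_le_pi (u + 1),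
    abs_sinSqDiv_le_pi (u - 1)]

theorem abs_sinSqKernel_le_inv_one_add_sq (u : ℝ) :
    |sinSqKernel u| ≤ (2 * π + 1) * (1 + u ^ 2)⁻¹ := by
  have hpos : 0 < 1 + u ^ 2 := by positivity
  rw [← div_eq_mul_inv, le_div_iff₀ hpos]
  calc |sinSqKernel u| * (1 + u ^ 2) = |2 * sinSqKernel u - sin (π * u) ^ 2| := by
        rw [show 2 * sinSqKernel u - sin (π * u) ^ 2 = sinSqKernel u * (1 + u ^ 2) by
          linear_combination -sq_mul_sinSqKernel u, abs_mul, abs_of_pos hpos]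
    _ ≤ |2 * sinSqKernel u| + |sin (π * u) ^ 2| := abs_sub _ _
    _ ≤ 2 * π + 1 := by
        rw [abs_mul, abs_two, abs_of_nonneg (sq_nonneg (sin _))]
        linarith [abs_sinSqKernel_le_pi u, sin_sq_le_one (π * u)]

theorem tendsto_sinSqKernel_atTop : Tendsto sinSqKernel atTop (𝓝 0) := by
  refine squeeze_zero_norm abs_sinSqKernel_le_inv_one_add_sq ?_
  have hsq : Tendsto (fun u : ℝ => 1 + u ^ 2) atTop atTop :=
    tendsto_atTop_add_const_left _ _ (tendsto_pow_atTop two_ne_zero)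
  simpa only [mul_zero, Function.comp_apply] using
    (tendsto_inv_atTop_zero.comp hsq).const_mul (2 * π + 1)

theorem integrableOn_Ioi_sinSqKernel : IntegrableOn sinSqKernel (Ioi 0) :=
  integrableOn_of_abs_le_inv_one_add_sq measurableSet_Ioi
    continuous_sinSqKernel.aestronglyMeasurable fun u _ => abs_sinSqKernel_le_inv_one_add_sq u

theorem integral_Ioi_sinSqKernel : ∫ u in Ioi 0, sinSqKernel u = 0 := by
  refine tendsto_nhds_unique
    (intervalIntegral_tendsto_integral_Ioi 0 integrableOn_Ioi_sinSqKernel tendsto_id) ?_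
  simp only [sinSqKernel_eq_sub_sinSqDiv, intervalIntegral.integral_div, id]
  simpa only [zero_div] using (tendsto_integral_comp_add_sub_comp_sub_of_odd
    continuous_sinSqDiv odd_sinSqDiv tendsto_sinSqDiv_atTop 1).div_const 2

theorem sinSqKernel_mul_div_sq_eq (a y : ℝ) (R : ℝ) {x : ℝ} (hx : x ≠ 0) :
    R ^ 4 * (sinSqKernel (R * x) * (x * y / (R * x) ^ 2)) =
      a * R ^ 2 * sinSqKernel (R * x) +
        (sin (π * (R * x)) ^ 2 * ((a * x - y) / x ^ 3) -
          sinSqKernel (R * x) * ((a * x - y) / x ^ 3)) := by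
  have hker := sq_mul_sinSqKernel (R * x)
  generalize sinSqKernel (R * x) = k at hker ⊢
  generalize sin (π * (R * x)) ^ 2 = s at hker ⊢
  obtain rfl : s = k - (R * x) ^ 2 * k := by linarith
  field_simp
  ring

section Limit

variable {a : ℝ} {f : ℝ → ℝ}

-- The term of order `R ^ 2` drops out because the kernel has integral zero.
theorem pow_four_mul_integral_sinSqKernel_eq
    (hf : IntegrableOn (fun x => (a * x - f x) / x ^ 3) (Ioi 0)) {R : ℝ} (hR : 0 < R) :
    R ^ 4 * ∫ x in Ioi 0, sinSqKernel (R * x) * (x * f x / (R * x) ^ 2) =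
      (∫ x in Ioi 0, sin (π * (R * x)) ^ 2 * ((a * x - f x) / x ^ 3)) -
        ∫ x in Ioi 0, sinSqKernel (R * x) * ((a * x - f x) / x ^ 3) := by
  have hkernel : IntegrableOn (fun x => sinSqKernel (R * x)) (Ioi 0) :=
    (integrableOn_Ioi_comp_mul_left_iff _ 0 hR).2 (by simpa using integrableOn_Ioi_sinSqKernel)
  have hsin : IntegrableOn (fun x => sin (π * (R * x)) ^ 2 * ((a * x - f x) / x ^ 3)) (Ioi 0) :=
    hf.bdd_mul (c := 1) (by fun_prop) (Eventually.of_forall fun x => by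
      rw [norm_pow]; exact pow_le_one₀ (norm_nonneg _) (abs_sin_le_one _))
  have hrem : IntegrableOn (fun x => sinSqKernel (R * x) * ((a * x - f x) / x ^ 3)) (Ioi 0) :=
    hf.bdd_mul (c := π) (continuous_sinSqKernel.comp (by fun_prop)).aestronglyMeasurable
      (Eventually.of_forall fun x => abs_sinSqKernel_le_pi _)
  have hdiff : IntegrableOn (fun x => sin (π * (R * x)) ^ 2 * ((a * x - f x) / x ^ 3) -
      sinSqKernel (R * x) * ((a * x - f x) / x ^ 3)) (Ioi 0) := hsin.sub hrem
  rw [← integral_const_mul, setIntegral_congr_fun measurableSet_Ioi fun x hx =>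
      sinSqKernel_mul_div_sq_eq a (f x) R (ne_of_gt hx),
    integral_add (hkernel.const_mul _) hdiff, integral_sub hsin hrem,
    integral_const_mul, integral_comp_mul_left_Ioi _ 0 hR, mul_zero, integral_Ioi_sinSqKernel,
    smul_zero, mul_zero, zero_add]

theorem tendsto_pow_four_mul_integral_sinSqKernel
    (hf : IntegrableOn (fun x => (a * x - f x) / x ^ 3) (Ioi 0)) :
    Tendsto (fun R => R ^ 4 * ∫ x in Ioi 0, sinSqKernel (R * x) * (x * f x / (R * x) ^ 2)) atTop
      (𝓝 ((∫ x in Ioi 0, (a * x - f x) / x ^ 3) / 2)) := by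
  have hmain := tendsto_setIntegral_sin_sq_pi_mul_mul measurableSet_Ioi hf
  have hrem := tendsto_integral_Ioi_comp_mul_left_mul continuous_sinSqKernel.measurable
    abs_sinSqKernel_le_pi tendsto_sinSqKernel_atTop hf
  rw [zero_mul] at hrem
  rw [← sub_zero (_ / 2)]
  refine (hmain.sub hrem).congr' ?_
  filter_upwards [eventually_gt_atTop 0] with R hR
  exact (pow_four_mul_integral_sinSqKernel_eq hf hR).symm

end Limit

/-! ### Inequalities for `tanh` and integration by parts -/

section Rescaling

variable {g : ℝ → ℝ} {c : ℝ}

theorem comp_mul_left_div_pow_three_eq (hc : c ≠ 0) (x : ℝ) :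
    g (c * x) / x ^ 3 = c ^ 3 * (g (c * x) / (c * x) ^ 3) := by
  field_simp

theorem integrableOn_Ioi_comp_mul_left_div_pow_three (hc : 0 < c)
    (hg : IntegrableOn (fun y => g y / y ^ 3) (Ioi 0)) :
    IntegrableOn (fun x => g (c * x) / x ^ 3) (Ioi 0) := by
  simp only [comp_mul_left_div_pow_three_eq hc.ne']
  refine Integrable.const_mul
    ((integrableOn_Ioi_comp_mul_left_iff (fun y => g y / y ^ 3) 0 hc).2 ?_) _
  rwa [mul_zero]

theorem integral_Ioi_comp_mul_left_div_pow_three (hc : 0 < c) :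
    ∫ x in Ioi 0, g (c * x) / x ^ 3 = c ^ 2 * ∫ y in Ioi 0, g y / y ^ 3 := by
  simp only [comp_mul_left_div_pow_three_eq hc.ne']
  rw [integral_const_mul, integral_comp_mul_left_Ioi (fun y => g y / y ^ 3) 0 hc, mul_zero,
    smul_eq_mul]
  field_simp

end Rescaling

theorem one_sub_tanh_sq (y : ℝ) : 1 - tanh y ^ 2 = 1 / cosh y ^ 2 := by
  rw [tanh_eq_sinh_div_cosh]
  field_simp
  linarith [cosh_sq y]

theorem hasDerivAt_tanh (y : ℝ) : HasDerivAt tanh (1 - tanh y ^ 2) y := by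
  have hquot := (hasDerivAt_sinh y).div (hasDerivAt_cosh y) (cosh_pos y).ne'
  rw [← sq, ← sq, cosh_sq, add_sub_cancel_left, ← cosh_sq, ← one_sub_tanh_sq] at hquot
  exact hquot.congr_of_eventuallyEq (Eventually.of_forall tanh_eq_sinh_div_cosh)

theorem continuous_tanh : Continuous tanh :=
  continuous_iff_continuousAt.2 fun y => (hasDerivAt_tanh y).continuousAt

theorem tanh_nonneg {y : ℝ} (hy : 0 ≤ y) : 0 ≤ tanh y := by
  rw [tanh_eq_sinh_div_cosh]
  exact div_nonneg (sinh_nonneg_iff.2 hy) (cosh_pos y).le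

theorem tanh_le_self {y : ℝ} (hy : 0 ≤ y) : tanh y ≤ y := by
  have hmono : Monotone fun x => x - tanh x :=
    monotone_of_hasDerivAt_nonneg (fun x => (hasDerivAt_id x).sub (hasDerivAt_tanh x))
      fun x => by simpa using sq_nonneg (tanh x)
  simpa using hmono hy

theorem mul_one_sub_tanh_sq_le_tanh {y : ℝ} (hy : 0 ≤ y) : y * (1 - tanh y ^ 2) ≤ tanh y := by
  have hcosh := cosh_pos y
  have hsinh : y ≤ sinh y * cosh y :=
    (self_le_sinh_iff.2 hy).trans
      (le_mul_of_one_le_right (sinh_nonneg_iff.2 hy) (one_le_cosh y))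
  rw [one_sub_tanh_sq, tanh_eq_sinh_div_cosh, mul_one_div, div_le_div_iff₀ (by positivity) hcosh]
  nlinarith

theorem mul_tanh_sq_le_pow_three {y : ℝ} (hy : 0 ≤ y) : y * tanh y ^ 2 ≤ y ^ 3 :=
  calc y * tanh y ^ 2 ≤ y * y ^ 2 := by gcongr; exacts [tanh_nonneg hy, tanh_le_self hy]
    _ = y ^ 3 := by ring

theorem sub_tanh_le_pow_three {y : ℝ} (hy : 0 ≤ y) : y - tanh y ≤ y ^ 3 := by
  linarith [mul_one_sub_tanh_sq_le_tanh hy, mul_tanh_sq_le_pow_three hy]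

theorem tanh_sub_mul_one_sub_tanh_sq_le_pow_three {y : ℝ} (hy : 0 ≤ y) :
    tanh y - y * (1 - tanh y ^ 2) ≤ y ^ 3 := by
  linarith [tanh_le_self hy, mul_tanh_sq_le_pow_three hy]

theorem integrableOn_Ioi_div_pow_three {g : ℝ → ℝ} (hg : Continuous g)
    (hnonneg : ∀ y > 0, 0 ≤ g y) (hself : ∀ y > 0, g y ≤ y) (hcube : ∀ y > 0, g y ≤ y ^ 3) :
    IntegrableOn (fun y => g y / y ^ 3) (Ioi 0) := by
  refine integrableOn_of_abs_le_inv_one_add_sq (C := 2) measurableSet_Ioi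
    (hg.measurable.div (by fun_prop)).aestronglyMeasurable fun y (hy : 0 < y) => ?_
  rw [abs_of_nonneg (div_nonneg (hnonneg y hy) (by positivity)), ← div_eq_mul_inv,
    div_le_div_iff₀ (by positivity) (by positivity)]
  nlinarith [mul_le_mul_of_nonneg_right (hself y hy) (sq_nonneg y), hcube y hy]

theorem integrableOn_Ioi_sub_tanh_div_pow_three :
    IntegrableOn (fun y => (y - tanh y) / y ^ 3) (Ioi 0) :=
  integrableOn_Ioi_div_pow_three (continuous_id.sub continuous_tanh)
    (fun _ hy => sub_nonneg.2 (tanh_le_self hy.le))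
    (fun _ hy => sub_le_self _ (tanh_nonneg hy.le)) fun _ hy => sub_tanh_le_pow_three hy.le

theorem sinh_mul_cosh_sub_div_eq (y : ℝ) :
    (sinh y * cosh y - y) / (y ^ 3 * cosh y ^ 2) = (tanh y - y * (1 - tanh y ^ 2)) / y ^ 3 := by
  rw [one_sub_tanh_sq, tanh_eq_sinh_div_cosh]
  field_simp

theorem integrableOn_Ioi_sinh_mul_cosh_sub_div :
    IntegrableOn (fun y => (sinh y * cosh y - y) / (y ^ 3 * cosh y ^ 2)) (Ioi 0) := by
  simp only [sinh_mul_cosh_sub_div_eq]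
  have hcont := continuous_tanh
  refine integrableOn_Ioi_div_pow_three (by fun_prop)
    (fun y hy => sub_nonneg.2 (mul_one_sub_tanh_sq_le_tanh hy.le)) (fun y hy => ?_)
    fun y hy => tanh_sub_mul_one_sub_tanh_sq_le_pow_three hy.le
  nlinarith [tanh_le_self hy.le, mul_pos hy (sub_pos.2 (tanh_sq_lt_one y))]

theorem hasDerivAt_tanh_sub_div_sq {y : ℝ} (hy : y ≠ 0) :
    HasDerivAt (fun y => (tanh y - y) / y ^ 2)
      ((y - tanh y) / y ^ 3 - (sinh y * cosh y - y) / (y ^ 3 * cosh y ^ 2)) y := by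
  rw [sinh_mul_cosh_sub_div_eq]
  refine (((hasDerivAt_tanh y).sub (hasDerivAt_id y)).div (hasDerivAt_pow 2 y)
    (pow_ne_zero 2 hy)).congr_deriv ?_
  simp only [Pi.sub_apply, id]
  field_simp
  ring

theorem abs_tanh_sub_div_sq_le {y C : ℝ} (hy : 0 < y) (hC : y - tanh y ≤ C * y ^ 2) :
    |(tanh y - y) / y ^ 2| ≤ C := by
  rwa [abs_div, abs_sub_comm, abs_of_nonneg (sub_nonneg.2 (tanh_le_self hy.le)),
    abs_of_pos (by positivity), div_le_iff₀ (by positivity)]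

theorem continuousWithinAt_tanh_sub_div_sq_zero :
    ContinuousWithinAt (fun y => (tanh y - y) / y ^ 2) (Ici 0) 0 := by
  have hlim : Tendsto (fun y : ℝ => (tanh y - y) / y ^ 2) (𝓝[≥] 0) (𝓝 0) := by
    refine squeeze_zero_norm' (a := id) ?_ (tendsto_nhdsWithin_of_tendsto_nhds tendsto_id)
    filter_upwards [self_mem_nhdsWithin] with y hy
    rcases (mem_Ici.1 hy).eq_or_lt with rfl | hpos
    · simp
    · exact abs_tanh_sub_div_sq_le hpos
        ((sub_tanh_le_pow_three hpos.le).trans_eq (by simp only [id]; ring))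
  simpa [ContinuousWithinAt] using hlim

theorem tendsto_tanh_sub_div_sq_atTop : Tendsto (fun y => (tanh y - y) / y ^ 2) atTop (𝓝 0) := by
  refine squeeze_zero_norm' ?_ tendsto_inv_atTop_zero
  filter_upwards [eventually_gt_atTop 0] with y hy
  refine abs_tanh_sub_div_sq_le hy ?_
  rw [sq, inv_mul_cancel_left₀ hy.ne']
  exact sub_le_self _ (tanh_nonneg hy.le)

-- The two integrands differ by the derivative of `(tanh y - y) / y ^ 2`, which vanishes at `0`
-- and at infinity.
theorem integral_Ioi_sinh_mul_cosh_sub_div :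
    ∫ y in Ioi 0, (sinh y * cosh y - y) / (y ^ 3 * cosh y ^ 2) =
      ∫ y in Ioi 0, (y - tanh y) / y ^ 3 := by
  have hFTC := integral_Ioi_of_hasDerivAt_of_tendsto continuousWithinAt_tanh_sub_div_sq_zero
    (fun y hy => hasDerivAt_tanh_sub_div_sq (ne_of_gt hy))
    (integrableOn_Ioi_sub_tanh_div_pow_three.sub integrableOn_Ioi_sinh_mul_cosh_sub_div)
    tendsto_tanh_sub_div_sq_atTop
  rw [integral_sub integrableOn_Ioi_sub_tanh_div_pow_three
    integrableOn_Ioi_sinh_mul_cosh_sub_div] at hFTC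
  simp only [tanh_zero, sub_zero, zero_div] at hFTC
  exact (sub_eq_zero.1 hFTC).symm

/-! ### Partial fractions of `tanh` -/

theorem hasSum_even_of_hasSum_odd {G : Type*} [AddCommGroup G] [UniformSpace G]
    [IsUniformAddGroup G] [CompleteSpace G] [T2Space G] {u : ℕ → G} {s t : G} (hu : HasSum u s)
    (hodd : HasSum (fun k => u (2 * k + 1)) t) : HasSum (fun k => u (2 * k)) (s - t) := by
  have heven : Summable fun k => u (2 * k) :=
    hu.summable.comp_injective (mul_right_injective₀ two_ne_zero)
  rw [hu.unique (heven.hasSum.even_add_odd hodd), add_sub_cancel_right]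
  exact heven.hasSum

theorem ofReal_mul_I_mem_integerComplement {t : ℝ} (ht : t ≠ 0) :
    (t * Complex.I : ℂ) ∈ Complex.integerComplement := by
  rw [Complex.mem_integerComplement_iff]
  rintro ⟨n, hn⟩
  exact ht (by simpa using congrArg Complex.im hn.symm)

-- Mittag-Leffler expansion of the cotangent, evaluated at `i y / π`.
theorem hasSum_coth_sub_inv {y : ℝ} (hy : y ≠ 0) :
    HasSum (fun n : ℕ => 2 * y / (y ^ 2 + ((n + 1) * π) ^ 2)) (cosh y / sinh y - 1 / y) := by
  have hmem := ofReal_mul_I_mem_integerComplement (div_ne_zero hy pi_ne_zero)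
  have hcot := ((summable_cotTerm hmem).hasSum_iff_tendsto_nat.2
    (tendsto_logDeriv_euler_cot_sub hmem)).mul_left (Complex.I / π)
  have hpi : (π : ℂ) ≠ 0 := Complex.ofReal_ne_zero.2 pi_ne_zero
  have hyC : (y : ℂ) ≠ 0 := Complex.ofReal_ne_zero.2 hy
  have hsinh : Complex.sinh y ≠ 0 := by exact_mod_cast sinh_ne_zero.2 hy
  have hvalue : Complex.I / π * (π * Complex.cot (π * ((y / π : ℝ) * Complex.I)) -
      1 / ((y / π : ℝ) * Complex.I)) = ((cosh y / sinh y - 1 / y : ℝ) : ℂ) := by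
    push_cast
    rw [← mul_assoc, mul_div_cancel₀ _ hpi, Complex.cot, Complex.cos_mul_I, Complex.sin_mul_I]
    field_simp
  rw [hvalue] at hcot
  refine Complex.hasSum_ofReal.1 (hcot.congr_fun fun n => ?_)
  have hden : ((y / π : ℝ) * Complex.I + (n + 1)) * ((y / π : ℝ) * Complex.I - (n + 1)) =
      -((y ^ 2 + ((n + 1) * π) ^ 2 : ℝ) : ℂ) / π ^ 2 := by
    push_cast
    field_simp
    linear_combination (y : ℂ) ^ 2 * Complex.I_sq
  rw [cotTerm_identity hmem, hden]
  push_cast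
  field_simp
  rw [Complex.I_sq]
  ring

/-- The positive numbers `p` for which `tanh` has a pole at `± i p`, in increasing order. -/
noncomputable def tanhPole (k : ℕ) : ℝ := (2 * k + 1) * π / 2

theorem tanhPole_pos (k : ℕ) : 0 < tanhPole k := by
  unfold tanhPole
  positivity

theorem two_mul_coth_two_mul_sub_coth {y : ℝ} (hy : y ≠ 0) :
    2 * (cosh (2 * y) / sinh (2 * y)) - cosh y / sinh y = tanh y := by
  have hsinh : sinh y ≠ 0 := sinh_ne_zero.2 hy
  rw [cosh_two_mul, sinh_two_mul, tanh_eq_sinh_div_cosh]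
  field_simp
  ring

theorem hasSum_tanh (y : ℝ) :
    HasSum (fun k => 2 * y / (y ^ 2 + tanhPole k ^ 2)) (tanh y) := by
  rcases eq_or_ne y 0 with rfl | hy
  · simp
  have hall := (hasSum_coth_sub_inv (mul_ne_zero two_ne_zero hy)).mul_left 2
  have hodd : HasSum (fun k : ℕ =>
      2 * (2 * (2 * y) / ((2 * y) ^ 2 + (((2 * k + 1 : ℕ) + 1) * π) ^ 2)))
      (cosh y / sinh y - 1 / y) := by
    refine (hasSum_coth_sub_inv hy).congr_fun fun k => ?_
    push_cast
    field_simp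
    ring
  have heven := hasSum_even_of_hasSum_odd hall hodd
  have hvalue : 2 * (cosh (2 * y) / sinh (2 * y) - 1 / (2 * y)) - (cosh y / sinh y - 1 / y) =
      tanh y := by
    rw [← two_mul_coth_two_mul_sub_coth hy]
    ring
  rw [hvalue] at heven
  refine heven.congr_fun fun k => ?_
  simp only [tanhPole]
  push_cast
  field_simp

theorem hasSum_two_div_tanhPole_sq : HasSum (fun k => 2 / tanhPole k ^ 2) 1 := by
  have hall : HasSum (fun n : ℕ => 1 / ((n : ℝ) + 1) ^ 2) (π ^ 2 / 6) := by
    simpa using (hasSum_nat_add_iff' 1).2 hasSum_zeta_two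
  have hodd : HasSum (fun k : ℕ => 1 / (((2 * k + 1 : ℕ) : ℝ) + 1) ^ 2) (1 / 4 * (π ^ 2 / 6)) := by
    refine (hall.mul_left (1 / 4)).congr_fun fun k => ?_
    push_cast
    field_simp
    ring
  have heven := (hasSum_even_of_hasSum_odd hall hodd).mul_left (8 / π ^ 2)
  have hvalue : 8 / π ^ 2 * (π ^ 2 / 6 - 1 / 4 * (π ^ 2 / 6)) = 1 := by
    field_simp
    norm_num
  rw [hvalue] at heven
  refine heven.congr_fun fun k => ?_
  simp only [tanhPole]
  push_cast
  field_simp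
  norm_num

theorem hasSum_sub_tanh_div_pow_three {y : ℝ} (hy : y ≠ 0) :
    HasSum (fun k => 2 / tanhPole k ^ 2 * (tanhPole k ^ 2 + y ^ 2)⁻¹) ((y - tanh y) / y ^ 3) := by
  have hsum := ((hasSum_two_div_tanhPole_sq.mul_left y).sub (hasSum_tanh y)).div_const (y ^ 3)
  rw [mul_one] at hsum
  refine hsum.congr_fun fun k => ?_
  have hpole := tanhPole_pos k
  field_simp
  ring

theorem inv_sq_add_sq_eq {p : ℝ} (hp : p ≠ 0) (y : ℝ) :
    (p ^ 2 + y ^ 2)⁻¹ = (p ^ 2)⁻¹ * (1 + (p⁻¹ * y) ^ 2)⁻¹ := by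
  field_simp

theorem integrable_inv_sq_add_sq {p : ℝ} (hp : p ≠ 0) :
    Integrable fun y : ℝ => (p ^ 2 + y ^ 2)⁻¹ := by
  simp only [inv_sq_add_sq_eq hp]
  exact (integrable_inv_one_add_sq.comp_mul_left' (inv_ne_zero hp)).const_mul _

theorem integral_Ioi_inv_sq_add_sq {p : ℝ} (hp : 0 < p) :
    ∫ y in Ioi 0, (p ^ 2 + y ^ 2)⁻¹ = π / (2 * p) := by
  simp only [inv_sq_add_sq_eq hp.ne']
  rw [integral_const_mul, integral_comp_mul_left_Ioi (fun y => (1 + y ^ 2)⁻¹) 0 (inv_pos.2 hp),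
    mul_zero, integral_Ioi_inv_one_add_sq, arctan_zero, sub_zero, inv_inv, smul_eq_mul]
  field_simp

theorem summable_pi_div_tanhPole_pow_three : Summable fun k => π / tanhPole k ^ 3 := by
  have hodd : Summable fun k : ℕ => 1 / ((2 * k + 1 : ℕ) : ℝ) ^ 3 :=
    (Real.summable_one_div_nat_pow.2 (by norm_num : 1 < 3)).comp_injective
      fun j k (hjk : 2 * j + 1 = 2 * k + 1) => by lia
  refine (hodd.mul_left (8 / π ^ 2)).congr fun k => ?_
  simp only [tanhPole]
  push_cast
  field_simp
  norm_num

theorem hasSum_integral_Ioi_sub_tanh_div_pow_three :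
    HasSum (fun k => π / tanhPole k ^ 3) (∫ y in Ioi 0, (y - tanh y) / y ^ 3) := by
  have hterm (k : ℕ) : ∫ y in Ioi 0, 2 / tanhPole k ^ 2 * (tanhPole k ^ 2 + y ^ 2)⁻¹ =
      π / tanhPole k ^ 3 := by
    have hpole := tanhPole_pos k
    rw [integral_const_mul, integral_Ioi_inv_sq_add_sq hpole]
    field_simp
  have hnorm (k : ℕ) (y : ℝ) : ‖2 / tanhPole k ^ 2 * (tanhPole k ^ 2 + y ^ 2)⁻¹‖ =
      2 / tanhPole k ^ 2 * (tanhPole k ^ 2 + y ^ 2)⁻¹ := norm_of_nonneg (by positivity)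
  have hsum := hasSum_integral_of_summable_integral_norm (μ := volume.restrict (Ioi 0))
    (fun k => ((integrable_inv_sq_add_sq (tanhPole_pos k).ne').const_mul
      (2 / tanhPole k ^ 2)).integrableOn)
    (by simpa only [hnorm, hterm] using summable_pi_div_tanhPole_pow_three)
  simp only [hterm] at hsum
  rwa [setIntegral_congr_fun measurableSet_Ioi fun y hy =>
    (hasSum_sub_tanh_div_pow_three (ne_of_gt hy)).tsum_eq] at hsum

theorem hasSum_four_div_odd_pow_three :
    HasSum (fun k : ℕ => 4 / (2 * (k : ℝ) + 1) ^ 3)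
      (π ^ 2 / 2 * ∫ y in Ioi 0, (y - tanh y) / y ^ 3) := by
  refine (hasSum_integral_Ioi_sub_tanh_div_pow_three.mul_left (π ^ 2 / 2)).congr_fun fun k => ?_
  simp only [tanhPole]
  field_simp
  norm_num

theorem lt_sum_range_four_div_odd_pow_three :
    4.2071 < ∑ k ∈ Finset.range 60, 4 / (2 * (k : ℝ) + 1) ^ 3 := by
  simp only [Finset.sum_range_succ, Finset.sum_range_zero]
  norm_num

theorem limit_integral_lambda1 :
    Filter.Tendsto
      (fun R : ℝ =>
        R ^ 4 *
          ∫ x in Set.Ioi (0 : ℝ),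
            (Real.sin (Real.pi * R * x)) ^ 2 / (1 - (R * x) ^ 2) *
              (x * Real.tanh (Real.pi * x) / (R * x) ^ 2))
      Filter.atTop
      (nhds ((Real.pi ^ 2 / 2) *
        ∫ x in Set.Ioi (0 : ℝ),
          (Real.sinh x * Real.cosh x - x) / (x ^ 3 * Real.cosh x ^ 2))) ∧
    (4.2071 : ℝ) <
      (Real.pi ^ 2 / 2) *
        ∫ x in Set.Ioi (0 : ℝ),
          (Real.sinh x * Real.cosh x - x) / (x ^ 3 * Real.cosh x ^ 2) := by
  simp only [integral_Ioi_sinh_mul_cosh_sub_div]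
  constructor
  · have hlim := tendsto_pow_four_mul_integral_sinSqKernel
      (integrableOn_Ioi_comp_mul_left_div_pow_three pi_pos integrableOn_Ioi_sub_tanh_div_pow_three)
    rw [integral_Ioi_comp_mul_left_div_pow_three (g := fun y => y - tanh y) pi_pos,
      mul_div_right_comm] at hlim
    simpa only [sinSqKernel, mul_assoc] using hlim
  · calc (4.2071 : ℝ) < ∑ k ∈ Finset.range 60, 4 / (2 * (k : ℝ) + 1) ^ 3 :=
          lt_sum_range_four_div_odd_pow_three
      _ ≤ π ^ 2 / 2 * ∫ y in Ioi 0, (y - tanh y) / y ^ 3 :=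
          sum_le_hasSum _ (fun k _ => by positivity) hasSum_four_div_odd_pow_three
end

section
/- Let α = 0.559 and c = 2.3726. Then ∫_κ^∞ (x − κ)^{2α}(c − x²)e^{−x²/2} dx < 0 for every κ ≥ 0.1814. -/
/-!
Substituting `x = t + κ` expresses the integral through the moments
`M κ p = ∫ t in Ioi 0, t ^ p * exp (-t ^ 2 / 2 - κ * t)`. Integration by parts gives
`M κ (p + 2) = (p + 1) * M κ p - κ * M κ (p + 1)`, and with `p = 2 * α` the integral turns out to be
negative iff `M κ (p + 2) / M κ p < 2 * (p + 1) - c + κ ^ 2`. The left-hand side decreases in `κ`,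
because a larger tilt `exp (-κ * t)` moves mass towards small `t`, while the right-hand side
increases in `κ ≥ 0`; hence only `κ = 0.1814` has to be examined. There, expand the nonnegative
integral of `t ^ (p + 1) * q(t) ^ 2 * exp (-t ^ 2 / 2 - κ * t)` for a well-chosen quartic `q` into
moments: the recurrence collapses it to a linear inequality between `M κ p` and `M κ (p + 1)`, which
is sharp enough.
-/

open MeasureTheory Set

/-- The density `t ^ p * exp (-t ^ 2 / 2 - κ * t)`, a Gaussian with power weight `p` and exponential
tilt `κ`. It is meant for `0 < t`. -/
noncomputable def tiltedGaussian (κ p t : ℝ) : ℝ :=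
  t ^ p * Real.exp (-t ^ 2 / 2 - κ * t)

/-- The moment of order `p` of the tilted Gaussian on the half-line; it is `0` by convention when
`p ≤ -1`, where the integral diverges. -/
noncomputable def tiltedMoment (κ p : ℝ) : ℝ :=
  ∫ t in Ioi 0, tiltedGaussian κ p t

section TiltedMoments

variable {κ κ₀ p r t : ℝ}

lemma tiltedGaussian_pos (ht : 0 < t) : 0 < tiltedGaussian κ p t := by
  unfold tiltedGaussian
  positivity

lemma tiltedGaussian_add (ht : 0 < t) :
    tiltedGaussian κ (p + r) t = t ^ r * tiltedGaussian κ p t := by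
  rw [tiltedGaussian, tiltedGaussian, Real.rpow_add ht]
  ring

lemma tiltedGaussian_eq_exp_mul (κ κ₀ p t : ℝ) :
    tiltedGaussian κ p t = Real.exp (-(κ - κ₀) * t) * tiltedGaussian κ₀ p t := by
  rw [tiltedGaussian, tiltedGaussian, mul_left_comm, ← Real.exp_add]
  ring_nf

lemma continuous_tiltedGaussian (hp : 0 ≤ p) : Continuous (tiltedGaussian κ p) :=
  (Real.continuous_rpow_const hp).mul (by fun_prop)

-- The square `(t / 2 + κ) ^ 2` absorbs a tilt of either sign into a wider Gaussian.
lemma tiltedGaussian_le (ht : 0 < t) :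
    tiltedGaussian κ p t ≤ Real.exp (κ ^ 2) * (t ^ p * Real.exp (-(1 / 4) * t ^ 2)) := by
  rw [tiltedGaussian, mul_left_comm, ← Real.exp_add]
  gcongr
  linarith [sq_nonneg (t / 2 + κ)]

lemma integrableOn_tiltedGaussian (hp : -1 < p) :
    IntegrableOn (tiltedGaussian κ p) (Ioi 0) := by
  have hdom : IntegrableOn (fun t : ℝ ↦ Real.exp (κ ^ 2) * (t ^ p * Real.exp (-(1 / 4) * t ^ 2)))
      (Ioi 0) :=
    (integrableOn_rpow_mul_exp_neg_mul_sq (by norm_num) hp).const_mul _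
  have hmeas : Measurable (tiltedGaussian κ p) := by
    unfold tiltedGaussian
    fun_prop
  refine hdom.mono' hmeas.aestronglyMeasurable ?_
  filter_upwards [ae_restrict_mem measurableSet_Ioi] with t ht
  rw [Real.norm_of_nonneg (tiltedGaussian_pos ht).le]
  exact tiltedGaussian_le ht

lemma tiltedMoment_pos (hp : -1 < p) : 0 < tiltedMoment κ p := by
  have hsupport : Function.support (tiltedGaussian κ p) ∩ Ioi 0 = Ioi 0 :=
    inter_eq_self_of_subset_right fun _ ht ↦ (tiltedGaussian_pos ht).ne'
  have hnonneg : 0 ≤ᵐ[volume.restrict (Ioi 0)] tiltedGaussian κ p :=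
    (ae_restrict_mem measurableSet_Ioi).mono fun _ ht ↦ (tiltedGaussian_pos ht).le
  rw [tiltedMoment, setIntegral_pos_iff_support_of_nonneg_ae hnonneg
    (integrableOn_tiltedGaussian hp), hsupport]
  simp

lemma hasDerivAt_tiltedGaussian_add_one (ht : 0 < t) :
    HasDerivAt (tiltedGaussian κ (p + 1)) ((p + 1) * tiltedGaussian κ p t
      - κ * tiltedGaussian κ (p + 1) t - tiltedGaussian κ (p + 2) t) t := by
  have hpow : HasDerivAt (fun t : ℝ ↦ t ^ (p + 1)) ((p + 1) * t ^ p) t := by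
    simpa using Real.hasDerivAt_rpow_const (p := p + 1) (Or.inl ht.ne')
  have hexponent : HasDerivAt (fun t : ℝ ↦ -t ^ 2 / 2 - κ * t) (-t - κ) t := by
    refine (((hasDerivAt_pow 2 t).neg.div_const 2).sub
      ((hasDerivAt_id t).const_mul κ)).congr_deriv ?_
    push_cast
    ring
  refine (hpow.mul hexponent.exp).congr_deriv ?_
  rw [show p + 2 = p + 1 + 1 by ring, tiltedGaussian_add (p := p + 1) ht, Real.rpow_one]
  unfold tiltedGaussian
  ring

lemma tiltedMoment_add_two (hp : -1 < p) :
    tiltedMoment κ (p + 2) = (p + 1) * tiltedMoment κ p - κ * tiltedMoment κ (p + 1) := by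
  have h₀ : IntegrableOn (fun t ↦ (p + 1) * tiltedGaussian κ p t) (Ioi 0) :=
    (integrableOn_tiltedGaussian hp).const_mul _
  have h₁ : IntegrableOn (tiltedGaussian κ (p + 1)) (Ioi 0) :=
    integrableOn_tiltedGaussian (by linarith)
  have h₂ : IntegrableOn (tiltedGaussian κ (p + 2)) (Ioi 0) :=
    integrableOn_tiltedGaussian (by linarith)
  have h₀₁ : IntegrableOn (fun t ↦ (p + 1) * tiltedGaussian κ p t
      - κ * tiltedGaussian κ (p + 1) t) (Ioi 0) := h₀.sub (h₁.const_mul κ)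
  have hderiv : ∀ t ∈ Ioi (0 : ℝ), HasDerivAt (tiltedGaussian κ (p + 1)) _ t :=
    fun t ht ↦ hasDerivAt_tiltedGaussian_add_one ht
  have hftc := integral_Ioi_of_hasDerivAt_of_tendsto
    (continuous_tiltedGaussian (by linarith)).continuousWithinAt hderiv (h₀₁.sub h₂)
    (tendsto_zero_of_hasDerivAt_of_integrableOn_Ioi hderiv (h₀₁.sub h₂) h₁)
  have hzero : tiltedGaussian κ (p + 1) 0 = 0 := by
    rw [tiltedGaussian, Real.zero_rpow (by linarith), zero_mul]
  rw [integral_sub h₀₁ h₂, integral_sub h₀ (h₁.const_mul κ), integral_const_mul,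
    integral_const_mul, hzero] at hftc
  unfold tiltedMoment
  linarith

lemma sum_sum_mul_tiltedMoment_nonneg (hp : -1 < p) {n : ℕ} (q : Fin n → ℝ) :
    0 ≤ ∑ i, ∑ j, q i * q j * tiltedMoment κ (p + (i + j : ℕ)) := by
  have hint (i j : Fin n) : IntegrableOn
      (fun t ↦ q i * q j * tiltedGaussian κ (p + (i + j : ℕ)) t) (Ioi 0) :=
    (integrableOn_tiltedGaussian (by linarith [(i + j : ℕ).cast_nonneg (α := ℝ)])).const_mul _
  have hsquare : ∫ t in Ioi 0, (∑ i, q i * t ^ (i : ℕ)) ^ 2 * tiltedGaussian κ p t =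
      ∑ i, ∑ j, q i * q j * tiltedMoment κ (p + (i + j : ℕ)) := by
    simp only [tiltedMoment, ← integral_const_mul]
    simp_rw [← integral_finsetSum _ fun j _ ↦ hint _ j]
    rw [← integral_finsetSum _ fun i _ ↦ integrable_finsetSum _ fun j _ ↦ hint i j]
    refine setIntegral_congr_fun measurableSet_Ioi fun t ht ↦ ?_
    simp_rw [sq, Finset.sum_mul_sum, Finset.sum_mul]
    refine Finset.sum_congr rfl fun i _ ↦ Finset.sum_congr rfl fun j _ ↦ ?_
    rw [tiltedGaussian_add ht, Real.rpow_natCast]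
    ring
  rw [← hsquare]
  exact setIntegral_nonneg measurableSet_Ioi fun t ht ↦
    mul_nonneg (sq_nonneg _) (tiltedGaussian_pos ht).le

lemma rpow_sub_mul_tiltedGaussian (ht : 0 < t) (m : ℝ) :
    (t ^ r - m) * tiltedGaussian κ p t = tiltedGaussian κ (p + r) t - m * tiltedGaussian κ p t := by
  rw [tiltedGaussian_add ht, sub_mul]

lemma integrableOn_rpow_sub_mul_tiltedGaussian (hp : -1 < p) (hr : 0 ≤ r) (m : ℝ) :
    IntegrableOn (fun t ↦ (t ^ r - m) * tiltedGaussian κ p t) (Ioi 0) := by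
  refine IntegrableOn.congr_fun ?_ (fun t ht ↦ (rpow_sub_mul_tiltedGaussian ht m).symm)
    measurableSet_Ioi
  exact (integrableOn_tiltedGaussian (by linarith)).sub
    ((integrableOn_tiltedGaussian hp).const_mul m)

lemma integral_rpow_sub_mul_tiltedGaussian (hp : -1 < p) (hr : 0 ≤ r) (m : ℝ) :
    ∫ t in Ioi 0, (t ^ r - m) * tiltedGaussian κ p t =
      tiltedMoment κ (p + r) - m * tiltedMoment κ p := by
  rw [setIntegral_congr_fun measurableSet_Ioi fun t ht ↦ rpow_sub_mul_tiltedGaussian ht m,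
    integral_sub (integrableOn_tiltedGaussian (by linarith))
      ((integrableOn_tiltedGaussian hp).const_mul m), integral_const_mul]
  rfl

lemma rpow_sub_rpow_mul_exp_neg_mul_le {a d : ℝ} (ht : 0 ≤ t) (ha : 0 ≤ a) (hr : 0 ≤ r)
    (hd : 0 ≤ d) :
    (t ^ r - a ^ r) * Real.exp (-d * t) ≤ (t ^ r - a ^ r) * Real.exp (-d * a) := by
  rcases le_total t a with hta | hat
  · refine mul_le_mul_of_nonpos_left ?_ (sub_nonpos.2 (by gcongr))
    exact Real.exp_le_exp.2 (mul_le_mul_of_nonpos_left hta (neg_nonpos.2 hd))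
  · refine mul_le_mul_of_nonneg_left ?_ (sub_nonneg.2 (by gcongr))
    exact Real.exp_le_exp.2 (mul_le_mul_of_nonpos_left hat (neg_nonpos.2 hd))

-- Chebyshev's argument: `t ^ r - a ^ r` changes sign at `t = a`, so replacing the decreasing factor
-- `exp (-(κ - κ₀) * t)` by its value at `a` can only increase the integral.
lemma tiltedMoment_add_sub_rpow_mul_le {a : ℝ} (hp : -1 < p) (hr : 0 ≤ r) (ha : 0 ≤ a)
    (hκ : κ₀ ≤ κ) :
    tiltedMoment κ (p + r) - a ^ r * tiltedMoment κ p ≤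
      Real.exp (-(κ - κ₀) * a) * (tiltedMoment κ₀ (p + r) - a ^ r * tiltedMoment κ₀ p) := by
  rw [← integral_rpow_sub_mul_tiltedGaussian hp hr, ← integral_rpow_sub_mul_tiltedGaussian hp hr,
    ← integral_const_mul]
  refine setIntegral_mono_on (integrableOn_rpow_sub_mul_tiltedGaussian hp hr _)
    ((integrableOn_rpow_sub_mul_tiltedGaussian hp hr _).const_mul _) measurableSet_Ioi
    fun t ht ↦ ?_
  rw [tiltedGaussian_eq_exp_mul κ κ₀, ← mul_assoc, mul_left_comm, ← mul_assoc]
  exact mul_le_mul_of_nonneg_right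
    (rpow_sub_rpow_mul_exp_neg_mul_le (le_of_lt ht) ha hr (sub_nonneg.2 hκ))
    (tiltedGaussian_pos ht).le

lemma antitone_tiltedMoment_div (hp : -1 < p) (hr : 0 < r) :
    Antitone fun κ ↦ tiltedMoment κ (p + r) / tiltedMoment κ p := by
  intro κ₀ κ hκ
  beta_reduce
  have hpos : 0 < tiltedMoment κ₀ p := tiltedMoment_pos hp
  have hratio : 0 ≤ tiltedMoment κ₀ (p + r) / tiltedMoment κ₀ p :=
    div_nonneg (tiltedMoment_pos (by linarith)).le hpos.le
  obtain ⟨a, ha, har⟩ : ∃ a : ℝ, 0 ≤ a ∧ a ^ r = tiltedMoment κ₀ (p + r) / tiltedMoment κ₀ p :=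
    ⟨_, Real.rpow_nonneg hratio r⁻¹, Real.rpow_inv_rpow hratio hr.ne'⟩
  have hvanish : tiltedMoment κ₀ (p + r) - a ^ r * tiltedMoment κ₀ p = 0 := by
    rw [har, div_mul_cancel₀ _ hpos.ne', sub_self]
  have hle := tiltedMoment_add_sub_rpow_mul_le hp hr.le ha hκ
  rw [hvanish, mul_zero] at hle
  rw [div_le_iff₀ (tiltedMoment_pos hp), ← har]
  exact sub_nonpos.1 hle

lemma setIntegral_Ioi_eq_setIntegral_Ioi_zero_comp_add {E : Type*}
    [NormedAddCommGroup E] [NormedSpace ℝ E] (f : ℝ → E) (κ : ℝ) :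
    ∫ x in Ioi κ, f x = ∫ t in Ioi 0, f (t + κ) := by
  have h := (measurePreserving_add_right volume κ).setIntegral_preimage_emb
    (measurableEmbedding_addRight κ) f (Ioi κ)
  rw [preimage_add_const_Ioi, sub_self] at h
  exact h.symm

lemma integral_sub_rpow_mul_mul_exp (f : ℝ → ℝ) (κ p : ℝ) :
    ∫ x in Ioi κ, (x - κ) ^ p * f x * Real.exp (-x ^ 2 / 2) =
      Real.exp (-κ ^ 2 / 2) * ∫ t in Ioi 0, f (t + κ) * tiltedGaussian κ p t := by
  rw [setIntegral_Ioi_eq_setIntegral_Ioi_zero_comp_add, ← integral_const_mul]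
  refine integral_congr_ae (.of_forall fun t ↦ ?_)
  have hexp : Real.exp (-(t + κ) ^ 2 / 2) =
      Real.exp (-κ ^ 2 / 2) * Real.exp (-t ^ 2 / 2 - κ * t) := by
    rw [← Real.exp_add]
    ring_nf
  simp only [add_sub_cancel_right, hexp, tiltedGaussian]
  ring

lemma integral_sub_add_sq_mul_tiltedGaussian (hp : -1 < p) (c : ℝ) :
    ∫ t in Ioi 0, (c - (t + κ) ^ 2) * tiltedGaussian κ p t =
      tiltedMoment κ (p + 2) - (2 * (p + 1) - c + κ ^ 2) * tiltedMoment κ p := by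
  have hexpand : ∀ t ∈ Ioi (0 : ℝ), (c - (t + κ) ^ 2) * tiltedGaussian κ p t =
      -(2 * κ) * ((t ^ (1 : ℝ) - 0) * tiltedGaussian κ p t)
        - (t ^ (2 : ℝ) - (c - κ ^ 2)) * tiltedGaussian κ p t := by
    intro t _
    rw [Real.rpow_one, Real.rpow_two]
    ring
  rw [setIntegral_congr_fun measurableSet_Ioi hexpand,
    integral_sub ((integrableOn_rpow_sub_mul_tiltedGaussian hp zero_le_one 0).const_mul _)
      (integrableOn_rpow_sub_mul_tiltedGaussian hp zero_le_two _), integral_const_mul,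
    integral_rpow_sub_mul_tiltedGaussian hp zero_le_one,
    integral_rpow_sub_mul_tiltedGaussian hp zero_le_two]
  linarith [tiltedMoment_add_two (κ := κ) hp]

lemma integral_neg_iff_tiltedMoment_div_lt (hp : -1 < p) (c : ℝ) :
    ∫ x in Ioi κ, (x - κ) ^ p * (c - x ^ 2) * Real.exp (-x ^ 2 / 2) < 0 ↔
      tiltedMoment κ (p + 2) / tiltedMoment κ p < 2 * (p + 1) - c + κ ^ 2 := by
  rw [integral_sub_rpow_mul_mul_exp (fun x ↦ c - x ^ 2),
    integral_sub_add_sq_mul_tiltedGaussian hp, ← neg_pos, ← mul_neg,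
    mul_pos_iff_of_pos_left (Real.exp_pos _), neg_sub, sub_pos, div_lt_iff₀ (tiltedMoment_pos hp)]

-- The coefficients round the kernel vector of the Hankel form at the smallest ratio
-- `μ 1 / μ 0 ≈ 1.222192` for which the form is positive semidefinite. In degrees below `4` the
-- corresponding threshold falls short of the `1.222128` that the theorem needs.
lemma mul_lt_of_recurrence_of_hankel_nonneg {μ : ℕ → ℝ} (hpos : 0 < μ 0)
    (hrec : ∀ n : ℕ, μ (n + 2) = (n + 2.118) * μ n - 0.1814 * μ (n + 1))
    (hhankel : 0 ≤ ∑ i : Fin 5, ∑ j : Fin 5,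
      ![88, -257, 236, -84, 10] i * ![88, -257, 236, -84, 10] j * μ (i + j + 1)) :
    1.22217 * μ 0 < μ 1 := by
  simp only [Fin.sum_univ_five, Fin.isValue, Matrix.cons_val, Fin.coe_ofNat_eq_mod, Nat.reduceMod,
    Nat.reduceAdd, hrec, Nat.cast_ofNat, Nat.cast_zero, Nat.cast_one] at hhankel
  linarith

lemma mul_tiltedMoment_lt_tiltedMoment_add_one :
    1.22217 * tiltedMoment 0.1814 1.118 < tiltedMoment 0.1814 (1.118 + 1) := by
  have hcompare := mul_lt_of_recurrence_of_hankel_nonneg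
    (μ := fun n ↦ tiltedMoment 0.1814 (1.118 + n)) (tiltedMoment_pos (by norm_num))
  simp only [Nat.cast_zero, add_zero, Nat.cast_one] at hcompare
  refine hcompare (fun n ↦ ?_) ?_
  · have hn : (-1 : ℝ) < 1.118 + n := by linarith [n.cast_nonneg (α := ℝ)]
    push_cast
    rw [← add_assoc, ← add_assoc, tiltedMoment_add_two hn]
    ring
  · have hshift (n : ℕ) : (1.118 : ℝ) + (n + 1 : ℕ) = 1.118 + 1 + n := by
      push_cast
      ring
    simp only [hshift]
    exact sum_sum_mul_tiltedMoment_nonneg (by norm_num) _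

lemma tiltedMoment_div_lt :
    tiltedMoment 0.1814 (1.118 + 2) / tiltedMoment 0.1814 1.118 < 1.8963 := by
  have hpos : 0 < tiltedMoment 0.1814 1.118 := tiltedMoment_pos (by norm_num)
  rw [div_lt_iff₀ hpos, tiltedMoment_add_two (by norm_num)]
  linarith [mul_tiltedMoment_lt_tiltedMoment_add_one]

end TiltedMoments

theorem integral_neg_systole (α c : ℝ) (hα : α = 0.559) (hc : c = 2.3726)
    (κ : ℝ) (hκ : 0.1814 ≤ κ) :
    (∫ x in Set.Ioi κ, (x - κ) ^ (2 * α) * (c - x ^ 2) * Real.exp (-x ^ 2 / 2)) < 0 := by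
  have hp : 2 * α = 1.118 := by norm_num [hα]
  rw [hp, hc, integral_neg_iff_tiltedMoment_div_lt (by norm_num)]
  calc tiltedMoment κ (1.118 + 2) / tiltedMoment κ 1.118
      ≤ tiltedMoment 0.1814 (1.118 + 2) / tiltedMoment 0.1814 1.118 :=
        antitone_tiltedMoment_div (by norm_num) two_pos hκ
    _ < 1.8963 := tiltedMoment_div_lt
    _ ≤ 2 * (1.118 + 1) - 2.3726 + 0.1814 ^ 2 := by norm_num
    _ ≤ 2 * (1.118 + 1) - 2.3726 + κ ^ 2 := by gcongr
end
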